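/- arXiv:1112.5677 — 3 statements merged into one kernel-verified Lean document; each statement's English description precedes it below -/
import Mathlib

section
/- Let 1 < p < 2 and 1/p + 1/q = 1. There is a constant c_p > 0 with the following property: let I, J be two intervals in [0,2π], let l be an affine map of I onto J with tangent coefficient a (so |a| = |J|/|I|), and let U, V ∈ A_p(𝕋) vanish on [0,2π] \ I and [0,2π] \ J respectively, with U(t) = V(l(t)) for t ∈ I. Then ‖U‖_{A_p(𝕋)} ≤ c_p · |a|^{-1/q} · ‖V‖_{A_p(𝕋)}. The constant c_p is independent of U, V, l, I, J. -/
open MeasureTheory Real Set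
open scoped ENNReal

/-- The k-th Fourier coefficient of a (2π-periodic) function on the circle,
identified with a function on [0, 2π]. -/
noncomputable def fourierCoef (f : ℝ → ℂ) (k : ℤ) : ℂ :=
  (1 / (2 * (Real.pi : ℂ))) *
    ∫ t in (0:ℝ)..(2 * Real.pi), f t * Complex.exp (-Complex.I * (k : ℂ) * (t : ℂ))

/-- The A_p(𝕋) norm: ℓ^p norm of the sequence of Fourier coefficients
(valued in ℝ≥0∞ so that divergence gives ∞). -/
noncomputable def ApNorm (p : ℝ) (f : ℝ → ℂ) : ℝ≥0∞ :=
  (∑' k : ℤ, ((‖fourierCoef f k‖₊ : ℝ≥0∞) ^ p)) ^ (1 / p)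

theorem trig_ineq (p : ℝ) (hp1 : 1 < p) (hp2 : p < 2) :
    ∃ A B : ℝ, 0 < A ∧ 0 < B ∧ ∀ w : ℂ, 0 < w.re →
      B * ‖w‖ ^ p ≤ A * w.re ^ p - (w ^ (p : ℂ)).re := by
  have hpi := Real.pi_pos
  set θ : ℝ := (π / (2 * p) + π / 2) / 2 with hθ
  have hpθ : p * θ = π / 4 + p * π / 4 := by rw [hθ]; field_simp; ring
  have hθ0 : 0 < θ := by positivity
  have hθ1 : θ < π / 2 := by
    by_contra hc
    push Not at hc
    have := mul_le_mul_of_nonneg_left hc (by linarith : 0 ≤ p)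
    nlinarith
  have hc : 0 < Real.cos θ := Real.cos_pos_of_mem_Ioo ⟨by linarith, hθ1⟩
  have hB : Real.cos (p * θ) < 0 := by
    apply Real.cos_neg_of_pi_div_two_lt_of_lt <;> rw [hpθ] <;> nlinarith
  refine ⟨(1 - Real.cos (p * θ)) / Real.cos θ ^ p, -Real.cos (p * θ), ?_, by linarith, ?_⟩
  · have : 0 < Real.cos θ ^ p := Real.rpow_pos_of_pos hc p
    apply div_pos _ this; linarith
  intro w hw
  have hw0 : w ≠ 0 := by rintro rfl; simp at hw
  have harg : |w.arg| < π / 2 := by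
    rw [Complex.abs_arg_lt_pi_div_two_iff]; exact Or.inl hw
  rw [Complex.cpow_ofReal_re, ← Complex.norm_mul_cos_arg w]
  have hcw : 0 < Real.cos w.arg := Real.cos_pos_of_mem_Ioo ⟨by linarith [(abs_lt.1 harg).1], (abs_lt.1 harg).2⟩
  rw [Real.mul_rpow (norm_nonneg _) hcw.le]
  have hn : 0 ≤ ‖w‖ ^ p := by positivity
  suffices h : -Real.cos (p * θ) ≤ (1 - Real.cos (p * θ)) / Real.cos θ ^ p * Real.cos w.arg ^ p
      - Real.cos (w.arg * p) by
    nlinarith [mul_le_mul_of_nonneg_left h hn]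
  have hcp : 0 < Real.cos θ ^ p := Real.rpow_pos_of_pos hc p
  rcases le_total θ |w.arg| with h | h
  · have h1 : Real.cos (w.arg * p) ≤ Real.cos (p * θ) := by
      rw [← Real.cos_abs (w.arg * p), abs_mul, abs_of_pos (by linarith : 0 < p)]
      apply Real.cos_le_cos_of_nonneg_of_le_pi
      · positivity
      · nlinarith
      · nlinarith
    have : 0 ≤ (1 - Real.cos (p * θ)) / Real.cos θ ^ p * Real.cos w.arg ^ p := by
      apply mul_nonneg (div_nonneg (by linarith) hcp.le) (by positivity)
    linarith
  · have h1 : Real.cos θ ≤ Real.cos w.arg := by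
      rw [← Real.cos_abs w.arg]
      apply Real.cos_le_cos_of_nonneg_of_le_pi (abs_nonneg _) (by linarith) h
    have h2 : Real.cos θ ^ p ≤ Real.cos w.arg ^ p := Real.rpow_le_rpow hc.le h1 (by linarith)
    have h3 : 1 - Real.cos (p * θ) ≤ (1 - Real.cos (p * θ)) / Real.cos θ ^ p * Real.cos w.arg ^ p := by
      rw [div_mul_eq_mul_div, le_div_iff₀ hcp]
      apply mul_le_mul_of_nonneg_left h2 (by linarith)
    linarith [Real.cos_le_one (w.arg * p)]

/-- The Cauchy-type transform of a finitely supported sequence, times `I`. -/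
noncomputable def hh (s : Finset ℤ) (f : ℤ → ℝ) (z : ℂ) : ℂ :=
  Complex.I * ∑ m ∈ s, (f m : ℂ) / (z - (m : ℂ))

theorem hh_re (s : Finset ℤ) (f : ℤ → ℝ) (z : ℂ) :
    (hh s f z).re = ∑ m ∈ s, f m * (z.im / ((z.re - m) ^ 2 + z.im ^ 2)) := by
  unfold hh
  simp only [Complex.mul_re, Complex.I_re, zero_mul, Complex.I_im, one_mul, zero_sub,
    Complex.im_sum, ← Finset.sum_neg_distrib]
  apply Finset.sum_congr rfl
  intro m _
  rw [Complex.div_im]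
  simp [Complex.normSq_apply]
  ring

theorem hh_re_pos (s : Finset ℤ) (f : ℤ → ℝ) (hf : ∀ m, 0 ≤ f m) (hs : ∃ m ∈ s, 0 < f m)
    (z : ℂ) (hz : 0 < z.im) : 0 < (hh s f z).re := by
  rw [hh_re]
  apply Finset.sum_pos'
  · intro m _
    have := hf m
    positivity
  · obtain ⟨m, hm, h⟩ := hs
    exact ⟨m, hm, by positivity⟩

theorem hh_diff (s : Finset ℤ) (f : ℤ → ℝ) (z : ℂ) (hz : 0 < z.im) :
    DifferentiableAt ℂ (hh s f) z := by
  unfold hh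
  apply DifferentiableAt.const_mul
  apply DifferentiableAt.fun_sum
  intro m _
  apply DifferentiableAt.div (by fun_prop) (by fun_prop)
  intro h
  have := congrArg Complex.im h
  simp at this
  linarith

theorem hh_norm_le (s : Finset ℤ) (f : ℤ → ℝ) (hf : ∀ m, 0 ≤ f m) (z : ℂ) (r : ℝ) (hr : 0 < r)
    (h : ∀ m ∈ s, r ≤ ‖z - (m : ℂ)‖) : ‖hh s f z‖ ≤ (∑ m ∈ s, f m) / r := by
  unfold hh
  rw [norm_mul, Complex.norm_I, one_mul, Finset.sum_div]
  refine (norm_sum_le _ _).trans (Finset.sum_le_sum fun m hm => ?_)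
  rw [norm_div, Complex.norm_real, Real.norm_of_nonneg (hf m)]
  have := hf m
  have := h m hm
  gcongr

theorem rect_bound (p : ℝ) (hp1 : 1 < p) (s : Finset ℤ) (f : ℤ → ℝ) (hf : ∀ m, 0 ≤ f m)
    (hs : ∃ m ∈ s, 0 < f m) (R : ℝ) (hR : 0 < R) (hRs : ∀ m ∈ s, 2 * |(m : ℝ)| ≤ R) :
    ‖∫ x in (-R)..R, (hh s f ((x : ℂ) + Complex.I)) ^ (p : ℂ)‖
      ≤ 4 * R * ((∑ m ∈ s, f m) / (R / 2)) ^ p := by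
  set D := ((∑ m ∈ s, f m) / (R / 2)) ^ p with hD
  have key := Complex.integral_boundary_rect_eq_zero_of_differentiableOn
    (fun z => (hh s f z) ^ (p : ℂ)) (⟨-R, 1⟩ : ℂ) (⟨R, R + 1⟩ : ℂ) (by
      intro z hz
      rw [Complex.mem_reProdIm] at hz
      have hz2 := hz.2
      simp only at hz2
      rw [uIcc_of_le (by linarith)] at hz2
      have hz3 : 0 < z.im := by linarith [hz2.1]
      apply DifferentiableAt.differentiableWithinAt
      apply DifferentiableAt.cpow (hh_diff s f z hz3) (by fun_prop)
      left
      exact hh_re_pos s f hf hs z hz3)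
  simp only [Complex.ofReal_one, one_mul] at key
  have hb : ∀ z : ℂ, (∀ m ∈ s, R / 2 ≤ ‖z - (m : ℂ)‖) → ‖(hh s f z) ^ (p : ℂ)‖ ≤ D := by
    intro z hz
    rw [Complex.norm_cpow_real]
    exact Real.rpow_le_rpow (norm_nonneg _) (hh_norm_le s f hf z _ (by linarith) hz) (by linarith)
  have b1 : ‖∫ x in (-R)..R, (hh s f ((x : ℂ) + ((R + 1 : ℝ) : ℂ) * Complex.I)) ^ (p : ℂ)‖
      ≤ D * |R - (-R)| := by
    apply intervalIntegral.norm_integral_le_of_norm_le_const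
    intro x _
    apply hb
    intro m _
    refine le_trans ?_ (Complex.abs_im_le_norm _)
    simp
    rw [abs_of_pos (by linarith)]; linarith
  have b2 : ∀ e : ℝ, |e| = R → ‖∫ y in (1:ℝ)..(R + 1), (hh s f ((e : ℂ) + (y : ℂ) * Complex.I)) ^ (p : ℂ)‖
      ≤ D * |R + 1 - 1| := by
    intro e he
    apply intervalIntegral.norm_integral_le_of_norm_le_const
    intro x _
    apply hb
    intro m hm
    refine le_trans ?_ (Complex.abs_re_le_norm _)
    simp
    have := abs_sub_abs_le_abs_sub e (m : ℝ)
    have := hRs m hm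
    linarith
  have b3 := b2 R (abs_of_pos hR)
  have b4 := b2 (-R) (by rw [abs_neg, abs_of_pos hR])
  have e1 : |R - -R| = 2 * R := by rw [abs_of_pos] <;> linarith
  have e2 : |R + 1 - 1| = R := by rw [abs_of_pos] <;> linarith
  rw [e1] at b1
  rw [e2] at b3 b4
  have key2 := eq_sub_of_add_eq (eq_of_sub_eq_zero key)
  rw [sub_eq_iff_eq_add] at key2
  rw [key2]
  refine (norm_add_le _ _).trans ?_
  refine (add_le_add_left (norm_sub_le _ _) _).trans ?_
  rw [norm_smul, norm_smul, Complex.norm_I, one_mul, one_mul]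
  linarith

theorem hh_line (s : Finset ℤ) (f : ℤ → ℝ) : Continuous fun x : ℝ => hh s f ((x : ℂ) + Complex.I) := by
  rw [continuous_iff_continuousAt]
  intro x
  have := (hh_diff s f ((x : ℂ) + Complex.I) (by simp)).continuousAt
  exact ContinuousAt.comp (f := fun x : ℝ => ((x : ℂ) + Complex.I)) this (by fun_prop)

theorem int_bound (p : ℝ) (hp1 : 1 < p) (hp2 : p < 2) : ∃ A B : ℝ, 0 < A ∧ 0 < B ∧
    ∀ (s : Finset ℤ) (f : ℤ → ℝ) (_ : ∀ m, 0 ≤ f m) (_ : ∃ m ∈ s, 0 < f m)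
      (R : ℝ) (_ : 0 < R) (_ : ∀ m ∈ s, 2 * |(m : ℝ)| ≤ R),
    B * ∫ x in (-R)..R, ‖hh s f ((x : ℂ) + Complex.I)‖ ^ p ≤
      A * (∫ x in (-R)..R, (hh s f ((x : ℂ) + Complex.I)).re ^ p) +
      4 * R * ((∑ m ∈ s, f m) / (R / 2)) ^ p := by
  obtain ⟨A, B, hA, hB, h⟩ := trig_ineq p hp1 hp2
  refine ⟨A, B, hA, hB, ?_⟩
  intro s f hf hs R hR hRs
  have hpos : ∀ x : ℝ, 0 < (hh s f ((x : ℂ) + Complex.I)).re := fun x =>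
    hh_re_pos s f hf hs _ (by simp)
  have hc := hh_line s f
  have hcp : Continuous fun x : ℝ => (hh s f ((x : ℂ) + Complex.I)) ^ (p : ℂ) := by
    apply Continuous.cpow hc continuous_const
    intro x; left; exact hpos x
  have hcr : Continuous fun x : ℝ => (hh s f ((x : ℂ) + Complex.I)).re ^ p := by
    apply Continuous.rpow_const (Complex.continuous_re.comp hc)
    intro x; right; linarith
  have hcn : Continuous fun x : ℝ => ‖hh s f ((x : ℂ) + Complex.I)‖ ^ p := by
    apply Continuous.rpow_const hc.norm
    intro x; right; linarith
  have hrb := rect_bound p hp1 s f hf hs R hR hRs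
  have e : (∫ x in (-R)..R, ((hh s f ((x : ℂ) + Complex.I)) ^ (p : ℂ)).re) =
      (∫ x in (-R)..R, (hh s f ((x : ℂ) + Complex.I)) ^ (p : ℂ)).re := by
    have := Complex.reCLM.intervalIntegral_comp_comm (hcp.intervalIntegrable (μ := volume) (-R) R)
    simpa using this
  have hre := (abs_le.1 ((Complex.abs_re_le_norm
    (∫ x in (-R)..R, (hh s f ((x : ℂ) + Complex.I)) ^ (p : ℂ))).trans hrb)).1
  rw [← e] at hre
  have hcpr : Continuous fun x : ℝ => ((hh s f ((x : ℂ) + Complex.I)) ^ (p : ℂ)).re :=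
    Complex.continuous_re.comp hcp
  have := intervalIntegral.integral_mono_on (μ := volume) (a := -R) (b := R) (by linarith)
    ((hcn.const_mul B).intervalIntegrable _ _) (((hcr.const_mul A).sub hcpr).intervalIntegrable _ _)
    (fun x _ => h _ (hpos x))
  simp only [Pi.sub_apply] at this
  rw [intervalIntegral.integral_sub ((hcr.const_mul A).intervalIntegrable _ _)
    (hcpr.intervalIntegrable _ _), intervalIntegral.integral_const_mul,
    intervalIntegral.integral_const_mul] at this
  linarith

theorem weight_sum : ∃ C : ℝ, 0 < C ∧ ∀ (s : Finset ℤ) (y : ℝ),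
    ∑ m ∈ s, 1 / ((y - m) ^ 2 + 1) ≤ C := by
  have hsum : Summable fun j : ℤ => 1 / ((j : ℝ) ^ 2 + 1) := by
    refine Summable.of_norm_bounded_eventually (g := fun j : ℤ => 1 / (j : ℝ) ^ 2)
      (Real.summable_one_div_int_pow.2 (by norm_num)) ?_
    have : ∀ᶠ j : ℤ in Filter.cofinite, j ≠ 0 := Filter.eventually_cofinite_ne 0
    filter_upwards [this] with j hj
    have hj' : (j : ℝ) ≠ 0 := by exact_mod_cast hj
    rw [Real.norm_of_nonneg (by positivity)]
    have : 0 < (j : ℝ) ^ 2 := by positivity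
    gcongr
    linarith
  have hnn : ∀ j : ℤ, 0 ≤ 1 / ((j : ℝ) ^ 2 + 1) := fun j => by positivity
  refine ⟨4 * ∑' j : ℤ, 1 / ((j : ℝ) ^ 2 + 1), ?_, ?_⟩
  · have : 1 / (((0 : ℤ) : ℝ) ^ 2 + 1) ≤ ∑' j : ℤ, 1 / ((j : ℝ) ^ 2 + 1) :=
      hsum.le_tsum 0 (fun j _ => hnn j)
    norm_num at this
    simp only [one_div]
    linarith
  · intro s y
    have h1 : ∀ m ∈ s, 1 / ((y - m) ^ 2 + 1) ≤ 4 * (1 / (((m - ⌊y⌋ : ℤ) : ℝ) ^ 2 + 1)) := by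
      intro m _
      push_cast
      have ha := Int.floor_le y
      have hb := Int.lt_floor_add_one y
      rw [mul_one_div, div_le_div_iff₀ (by positivity) (by positivity)]
      set n : ℝ := (⌊y⌋ : ℝ)
      nlinarith [sq_nonneg (y - m + (y - n)), sq_nonneg (y - m - (y - n))]
    refine (Finset.sum_le_sum h1).trans ?_
    rw [← Finset.mul_sum]
    gcongr
    have h2 : Summable fun m : ℤ => 1 / (((m - ⌊y⌋ : ℤ) : ℝ) ^ 2 + 1) :=
      hsum.comp_injective (i := fun m : ℤ => m - ⌊y⌋) (sub_left_injective)
    refine (h2.sum_le_tsum s (fun j _ => hnn _)).trans ?_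
    exact le_of_eq ((Equiv.subRight ⌊y⌋).tsum_eq (fun j : ℤ => 1 / ((j : ℝ) ^ 2 + 1)))

theorem hh_re_line (s : Finset ℤ) (f : ℤ → ℝ) (x : ℝ) :
    (hh s f ((x : ℂ) + Complex.I)).re = ∑ m ∈ s, 1 / ((x - m) ^ 2 + 1) * f m := by
  rw [hh_re]
  simp [mul_comm]

theorem re_int (p : ℝ) (hp1 : 1 < p) : ∃ C : ℝ, 0 < C ∧
    ∀ (s : Finset ℤ) (f : ℤ → ℝ) (_ : ∀ m, 0 ≤ f m) (R : ℝ) (_ : 0 < R),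
    (∫ x in (-R)..R, (hh s f ((x : ℂ) + Complex.I)).re ^ p) ≤ C * ∑ m ∈ s, f m ^ p := by
  obtain ⟨C, hC, h⟩ := weight_sum
  refine ⟨C ^ (p - 1) * π, by positivity, ?_⟩
  intro s f hf R hR
  have hp0 : 0 < p := by linarith
  have hpt : ∀ x : ℝ, (hh s f ((x : ℂ) + Complex.I)).re ^ p ≤
      C ^ (p - 1) * ∑ m ∈ s, 1 / ((x - m) ^ 2 + 1) * f m ^ p := by
    intro x
    rw [hh_re_line]
    have h1 := Real.inner_le_weight_mul_Lp_of_nonneg s hp1.le (fun m : ℤ => 1 / ((x - m) ^ 2 + 1)) f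
      (fun m => by positivity) hf
    have h0 : 0 ≤ ∑ m ∈ s, 1 / ((x - m) ^ 2 + 1) * f m :=
      Finset.sum_nonneg fun m _ => mul_nonneg (by positivity) (hf m)
    have hw0 : 0 ≤ ∑ m ∈ s, 1 / ((x - m) ^ 2 + 1) :=
      Finset.sum_nonneg fun m _ => (by positivity)
    have hq0 : 0 ≤ ∑ m ∈ s, 1 / ((x - m) ^ 2 + 1) * f m ^ p :=
      Finset.sum_nonneg fun m _ => mul_nonneg (by positivity) (Real.rpow_nonneg (hf m) p)
    refine (Real.rpow_le_rpow h0 h1 hp0.le).trans ?_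
    rw [Real.mul_rpow (Real.rpow_nonneg hw0 _) (Real.rpow_nonneg hq0 _), ← Real.rpow_mul hw0,
      ← Real.rpow_mul hq0, inv_mul_cancel₀ hp0.ne', Real.rpow_one]
    have e : (1 - p⁻¹) * p = p - 1 := by field_simp
    rw [e]
    exact mul_le_mul_of_nonneg_right
      (Real.rpow_le_rpow hw0 (h s x) (by linarith : (0:ℝ) ≤ p - 1)) hq0
  have hpos : ∀ x : ℝ, 0 ≤ (hh s f ((x : ℂ) + Complex.I)).re := by
    intro x
    rw [hh_re_line]
    exact Finset.sum_nonneg fun m _ => mul_nonneg (by positivity) (hf m)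
  have hcr : Continuous fun x : ℝ => (hh s f ((x : ℂ) + Complex.I)).re ^ p := by
    apply Continuous.rpow_const (Complex.continuous_re.comp (hh_line s f))
    intro x; right; linarith
  have hcw : ∀ m : ℤ, Continuous fun x : ℝ => 1 / ((x - m) ^ 2 + 1) := by
    intro m
    apply Continuous.div continuous_const (by fun_prop)
    intro x; positivity
  have hcs : Continuous fun x : ℝ => ∑ m ∈ s, 1 / ((x - m) ^ 2 + 1) * f m ^ p :=
    continuous_finsetSum _ fun m _ => (hcw m).mul continuous_const
  refine (intervalIntegral.integral_mono_on (μ := volume) (by linarith) (hcr.intervalIntegrable _ _)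
    ((hcs.const_mul _).intervalIntegrable _ _) (fun x _ => hpt x)).trans ?_
  rw [intervalIntegral.integral_const_mul, mul_assoc]
  gcongr
  have hii : ∀ m ∈ s, IntervalIntegrable (fun x : ℝ => 1 / ((x - m) ^ 2 + 1) * f m ^ p)
      volume (-R) R := fun m _ => ((hcw m).mul continuous_const).intervalIntegrable _ _
  rw [intervalIntegral.integral_finsetSum hii, Finset.mul_sum]
  apply Finset.sum_le_sum
  intro m _
  rw [intervalIntegral.integral_mul_const]
  have := Real.rpow_nonneg (hf m) p
  gcongr
  have e : (∫ x in (-R)..R, 1 / ((x - m) ^ 2 + 1)) = ∫ x in (-R - m)..(R - m), 1 / (1 + x ^ 2) := by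
    rw [← intervalIntegral.integral_comp_sub_right (fun x : ℝ => 1 / (1 + x ^ 2)) (m : ℝ)]
    simp only [add_comm]
  rw [e, integral_one_div_one_add_sq]
  linarith [Real.arctan_lt_pi_div_two (R - m), Real.neg_pi_div_two_lt_arctan (-R - m)]

/-- The kernel. -/
noncomputable def SS (x : ℝ) : ℂ :=
  (1 / (2 * (Real.pi : ℂ))) *
    ∫ t in (0:ℝ)..(2 * Real.pi), Complex.exp (-Complex.I * (x : ℂ) * (t : ℂ))

noncomputable def th (x : ℝ) : ℂ :=
  (1 - Complex.exp (-Complex.I * (x : ℂ) * (2 * Real.pi : ℝ))) / (2 * Real.pi * Complex.I)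

theorem norm_exp_aux (x t : ℝ) : ‖Complex.exp (-Complex.I * (x : ℂ) * (t : ℂ))‖ = 1 := by
  rw [Complex.norm_exp]; simp

theorem SS_norm (x : ℝ) : ‖SS x‖ ≤ 1 := by
  unfold SS
  have h : ‖∫ t in (0:ℝ)..(2 * Real.pi), Complex.exp (-Complex.I * (x : ℂ) * (t : ℂ))‖
      ≤ 1 * |2 * π - 0| := by
    apply intervalIntegral.norm_integral_le_of_norm_le_const
    intro t _
    rw [norm_exp_aux]
  have hpi := Real.pi_pos
  rw [sub_zero, abs_of_pos (by positivity), one_mul] at h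
  rw [norm_mul]
  have e : ‖(1 / (2 * (Real.pi : ℂ)))‖ = 1 / (2 * π) := by
    simp [abs_of_pos hpi]
  rw [e, div_mul_eq_mul_div, div_le_one (by positivity)]
  linarith

theorem th_norm (x : ℝ) : ‖th x‖ ≤ 1 := by
  unfold th
  rw [norm_div]
  have h1 : ‖1 - Complex.exp (-Complex.I * (x : ℂ) * (2 * Real.pi : ℝ))‖ ≤ 2 := by
    refine (norm_sub_le _ _).trans ?_
    rw [norm_exp_aux, norm_one]; norm_num
  have hpi := Real.pi_gt_three
  have h2 : ‖(2 * Real.pi * Complex.I : ℂ)‖ = 2 * π := by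
    simp [abs_of_pos Real.pi_pos]
  rw [h2, div_le_one (by positivity)]
  linarith

theorem th_eq (x : ℝ) : (x : ℂ) * SS x = th x := by
  have hpi : (Real.pi : ℂ) ≠ 0 := by exact_mod_cast Real.pi_ne_zero
  by_cases hx : x = 0
  · subst hx; simp [th]
  have hx' : (x : ℂ) ≠ 0 := by exact_mod_cast hx
  unfold SS th
  rw [integral_exp_mul_complex (mul_ne_zero (neg_ne_zero.2 Complex.I_ne_zero) hx')]
  simp
  field_simp
  ring

theorem th_per (x : ℝ) (m : ℤ) : th (x - m) = th x := by
  unfold th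
  have : -Complex.I * ((x - m : ℝ) : ℂ) * ((2 * Real.pi : ℝ) : ℂ) =
      -Complex.I * (x : ℂ) * ((2 * Real.pi : ℝ) : ℂ) + m * (2 * Real.pi * Complex.I) := by
    push_cast; ring
  rw [this, Complex.exp_add, Complex.exp_int_mul_two_pi_mul_I, mul_one]

theorem SS_approx (x x' : ℝ) (h : |x' - x| ≤ 1) :
    ‖SS x - th x / ((x' : ℂ) + Complex.I)‖ ≤ 6 * (1 / (x' ^ 2 + 1)) := by
  have hne : (x' : ℂ) + Complex.I ≠ 0 := by
    intro h; have := congrArg Complex.im h; simp at this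
  have e : SS x - th x / ((x' : ℂ) + Complex.I) =
      (SS x * (((x' - x : ℝ) : ℂ) + Complex.I)) * (SS x * 0 + 1) / ((x' : ℂ) + Complex.I) := by
    rw [← th_eq]; field_simp; push_cast; ring
  have hd : ‖((x' - x : ℝ) : ℂ) + Complex.I‖ ≤ 2 := by
    refine (norm_add_le _ _).trans ?_
    rw [Complex.norm_I, Complex.norm_real, Real.norm_eq_abs]; linarith
  have hS := SS_norm x
  have hb : ‖SS x‖ * ‖(x' : ℂ) + Complex.I‖ ≤ 3 := by
    rw [← norm_mul]
    have : SS x * ((x' : ℂ) + Complex.I) = th x + SS x * (((x' - x : ℝ) : ℂ) + Complex.I) := by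
      rw [← th_eq]; push_cast; ring
    rw [this]
    refine (norm_add_le _ _).trans ?_
    rw [norm_mul]
    have := th_norm x
    nlinarith [norm_nonneg (SS x)]
  have hsq : ‖(x' : ℂ) + Complex.I‖ ^ 2 = x' ^ 2 + 1 := by
    rw [← Complex.normSq_eq_norm_sq, Complex.normSq_apply]; simp; ring
  have hnp : 0 < ‖(x' : ℂ) + Complex.I‖ := norm_pos_iff.2 hne
  rw [e, mul_zero, zero_add, mul_one, norm_div, norm_mul, mul_one_div, ← hsq, div_le_div_iff₀ hnp (by positivity)]
  have h1 : ‖SS x‖ * ‖((x' - x : ℝ) : ℂ) + Complex.I‖ * ‖(x' : ℂ) + Complex.I‖ ≤ 6 := by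
    calc _ = (‖SS x‖ * ‖(x' : ℂ) + Complex.I‖) * ‖((x' - x : ℝ) : ℂ) + Complex.I‖ := by ring
      _ ≤ 3 * 2 := by gcongr
      _ = 6 := by norm_num
  nlinarith

theorem SS_sum_le (s : Finset ℤ) (f : ℤ → ℝ) (hf : ∀ m, 0 ≤ f m) (y y' : ℝ) (h : |y' - y| ≤ 1) :
    ‖∑ m ∈ s, (f m : ℂ) * SS (y - m)‖ ≤ 7 * ‖hh s f ((y' : ℂ) + Complex.I)‖ := by
  set H := ∑ m ∈ s, (f m : ℂ) / ((y' : ℂ) + Complex.I - m) with hH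
  have hn : ‖hh s f ((y' : ℂ) + Complex.I)‖ = ‖H‖ := by
    unfold hh; rw [norm_mul, Complex.norm_I, one_mul]
  have e : ∑ m ∈ s, (f m : ℂ) * SS (y - m) = th y * H +
      ∑ m ∈ s, (f m : ℂ) * (SS (y - m) - th (y - m) / (((y' - m : ℝ) : ℂ) + Complex.I)) := by
    rw [hH, Finset.mul_sum, ← Finset.sum_add_distrib]
    apply Finset.sum_congr rfl
    intro m _
    rw [th_per]
    push_cast
    rw [show (y' : ℂ) - m + Complex.I = y' + Complex.I - m by ring]
    ring
  have h2 : ‖∑ m ∈ s, (f m : ℂ) * (SS (y - m) - th (y - m) / (((y' - m : ℝ) : ℂ) + Complex.I))‖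
      ≤ 6 * (hh s f ((y' : ℂ) + Complex.I)).re := by
    rw [hh_re_line, Finset.mul_sum]
    refine (norm_sum_le _ _).trans (Finset.sum_le_sum fun m _ => ?_)
    rw [norm_mul, Complex.norm_real, Real.norm_of_nonneg (hf m)]
    have := SS_approx (y - m) (y' - m) (by simpa using h)
    nlinarith [mul_le_mul_of_nonneg_left this (hf m)]
  have h3 := Complex.re_le_norm (hh s f ((y' : ℂ) + Complex.I))
  rw [e]
  refine (norm_add_le _ _).trans ?_
  rw [norm_mul, ← hn]
  have := th_norm y
  nlinarith [norm_nonneg (hh s f ((y' : ℂ) + Complex.I))]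

theorem core_nonneg (p : ℝ) (hp1 : 1 < p) (hp2 : p < 2) : ∃ C : ℝ, 0 < C ∧
    ∀ (s : Finset ℤ) (f : ℤ → ℝ) (_ : ∀ m, 0 ≤ f m) (K : Finset ℤ) (δ : ℝ),
    ∑ k ∈ K, ‖∑ m ∈ s, (f m : ℂ) * SS (δ + k - m)‖ ^ p ≤ C * ∑ m ∈ s, f m ^ p := by
  obtain ⟨A, B, hA, hB, h1⟩ := int_bound p hp1 hp2
  obtain ⟨C, hC, h2⟩ := re_int p hp1
  refine ⟨7 ^ p * (A * C / B), by positivity, ?_⟩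
  intro s f hf K δ
  have hp0 : 0 < p := by linarith
  by_cases hs : ∃ m ∈ s, 0 < f m
  swap
  · push Not at hs
    have hz : ∀ m ∈ s, f m = 0 := fun m hm => le_antisymm (hs m hm) (hf m)
    have e1 : ∀ k : ℤ, ∑ m ∈ s, (f m : ℂ) * SS (δ + k - m) = 0 := by
      intro k
      apply Finset.sum_eq_zero
      intro m hm
      simp [hz m hm]
    simp only [e1, norm_zero, Real.zero_rpow hp0.ne', Finset.sum_const_zero]
    have : 0 ≤ ∑ m ∈ s, f m ^ p := Finset.sum_nonneg fun m _ => Real.rpow_nonneg (hf m) p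
    positivity
  set M := ∑ m ∈ s, f m with hM
  have hM0 : 0 ≤ M := Finset.sum_nonneg fun m _ => hf m
  have hcn : Continuous fun x : ℝ => ‖hh s f ((x : ℂ) + Complex.I)‖ ^ p := by
    apply Continuous.rpow_const (hh_line s f).norm
    intro x; right; linarith
  have ev : ∀ᶠ R : ℝ in Filter.atTop, ∑ k ∈ K, ‖∑ m ∈ s, (f m : ℂ) * SS (δ + k - m)‖ ^ p ≤
      7 ^ p * ((A * (C * ∑ m ∈ s, f m ^ p) + 4 * R * (M / (R / 2)) ^ p) / B) := by
    have c1 : ∀ᶠ R : ℝ in Filter.atTop, ∀ m ∈ s, 2 * |(m : ℝ)| ≤ R :=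
      (Finset.eventually_all s).2 fun m _ => Filter.eventually_ge_atTop _
    have c2 : ∀ᶠ R : ℝ in Filter.atTop, ∀ k ∈ K, |(k : ℝ)| + |δ| + 1 ≤ R :=
      (Finset.eventually_all K).2 fun m _ => Filter.eventually_ge_atTop _
    filter_upwards [c1, c2, Filter.eventually_gt_atTop 0] with R hRs hRK hR
    have b1 := h1 s f hf hs R hR hRs
    have b2 := h2 s f hf R hR
    have b3 : ∫ x in (-R)..R, ‖hh s f ((x : ℂ) + Complex.I)‖ ^ p ≤
        (A * (C * ∑ m ∈ s, f m ^ p) + 4 * R * (M / (R / 2)) ^ p) / B := by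
      rw [le_div_iff₀ hB]
      nlinarith [mul_le_mul_of_nonneg_left b2 hA.le]
    refine le_trans ?_ (mul_le_mul_of_nonneg_left b3 (by positivity))
    have b4 : ∀ k ∈ K, ‖∑ m ∈ s, (f m : ℂ) * SS (δ + k - m)‖ ^ p ≤
        7 ^ p * ∫ x in Ioc (δ + k) (δ + k + 1), ‖hh s f ((x : ℂ) + Complex.I)‖ ^ p := by
      intro k _
      rw [← intervalIntegral.integral_of_le (by linarith), ← intervalIntegral.integral_const_mul]
      have : ‖∑ m ∈ s, (f m : ℂ) * SS (δ + k - m)‖ ^ p =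
          ∫ x in (δ + k)..(δ + k + 1), ‖∑ m ∈ s, (f m : ℂ) * SS (δ + k - m)‖ ^ p := by
        simp
      rw [this]
      apply intervalIntegral.integral_mono_on (by linarith) (by simp)
        ((hcn.const_mul _).intervalIntegrable _ _)
      intro x hx
      rw [← Real.mul_rpow (by norm_num) (norm_nonneg _)]
      apply Real.rpow_le_rpow (norm_nonneg _) _ hp0.le
      apply SS_sum_le s f hf
      rw [abs_le]; constructor <;> linarith [hx.1, hx.2]
    refine (Finset.sum_le_sum b4).trans ?_
    rw [← Finset.mul_sum]
    gcongr
    rw [← integral_biUnion_finset K (fun k _ => measurableSet_Ioc), intervalIntegral.integral_of_le (by linarith)]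
    · apply setIntegral_mono_set
      · exact (hcn.integrableOn_Icc).mono_set Ioc_subset_Icc_self
      · exact Filter.Eventually.of_forall fun x => by positivity
      · apply LE.le.eventuallyLE
        intro x hx
        simp only [mem_iUnion] at hx
        obtain ⟨k, hk, hx⟩ := hx
        have := hRK k hk
        have := neg_abs_le (k : ℝ)
        have := neg_abs_le δ
        have := le_abs_self (k : ℝ)
        have := le_abs_self δ
        exact ⟨by linarith [hx.1], by linarith [hx.2]⟩
    · intro i _ j _ hij
      exact pairwise_disjoint_Ioc_add_intCast δ hij
    · intro k _
      exact (hcn.integrableOn_Icc).mono_set Ioc_subset_Icc_self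
  have lim : Filter.Tendsto (fun R : ℝ => 4 * R * (M / (R / 2)) ^ p) Filter.atTop (nhds 0) := by
    have l1 := (tendsto_rpow_neg_atTop (by linarith : 0 < p - 1)).const_mul (4 * (2 * M) ^ p)
    rw [mul_zero] at l1
    refine l1.congr' ?_
    filter_upwards [Filter.eventually_gt_atTop 0] with R hR
    rw [show M / (R / 2) = (2 * M) / R by field_simp, Real.div_rpow (by positivity) hR.le,
      neg_sub, Real.rpow_sub hR, Real.rpow_one]
    ring
  have lim2 : Filter.Tendsto (fun R : ℝ => 7 ^ p * ((A * (C * ∑ m ∈ s, f m ^ p) +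
      4 * R * (M / (R / 2)) ^ p) / B)) Filter.atTop
      (nhds (7 ^ p * ((A * (C * ∑ m ∈ s, f m ^ p) + 0) / B))) :=
    ((lim.const_add _).div_const _).const_mul _
  have := ge_of_tendsto lim2 ev
  refine this.trans (le_of_eq ?_)
  ring

theorem core_complex (p : ℝ) (hp1 : 1 < p) (hp2 : p < 2) : ∃ C : ℝ, 0 < C ∧
    ∀ (s : Finset ℤ) (c : ℤ → ℂ) (K : Finset ℤ) (δ : ℝ),
    ∑ k ∈ K, ‖∑ m ∈ s, c m * SS (δ + k - m)‖ ^ p ≤ C * ∑ m ∈ s, ‖c m‖ ^ p := by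
  obtain ⟨C, hC, h⟩ := core_nonneg p hp1 hp2
  refine ⟨4 ^ (p - 1) * (4 * C), by positivity, ?_⟩
  intro s c K δ
  have hp0 : 0 < p := by linarith
  let g : Fin 4 → ℤ → ℝ := ![fun m => max (c m).re 0, fun m => max (-(c m).re) 0,
    fun m => max (c m).im 0, fun m => max (-(c m).im) 0]
  have hg0 : ∀ i m, 0 ≤ g i m := by
    intro i m
    fin_cases i <;> simp [g]
  have hgle : ∀ i m, g i m ≤ ‖c m‖ := by
    intro i m
    have a1 := abs_le.1 (Complex.abs_re_le_norm (c m))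
    have a2 := abs_le.1 (Complex.abs_im_le_norm (c m))
    fin_cases i <;> simp [g] <;> linarith
  let T : Fin 4 → ℤ → ℂ := fun i k => ∑ m ∈ s, (g i m : ℂ) * SS (δ + k - m)
  have hdec : ∀ k : ℤ, ∑ m ∈ s, c m * SS (δ + k - m) =
      T 0 k - T 1 k + Complex.I * (T 2 k - T 3 k) := by
    intro k
    simp only [T, ← Finset.sum_sub_distrib, Finset.mul_sum, ← Finset.sum_add_distrib]
    apply Finset.sum_congr rfl
    intro m _
    have e : c m = (g 0 m : ℂ) - g 1 m + Complex.I * (g 2 m - g 3 m) := by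
      have aux : ∀ x : ℝ, max x 0 - max (-x) 0 = x := by
        intro x
        rcases le_total x 0 with hx | hx
        · rw [max_eq_right hx, max_eq_left (by linarith)]; ring
        · rw [max_eq_left hx, max_eq_right (by linarith)]; ring
      have e0 : g 0 m - g 1 m = (c m).re := aux _
      have e1 : g 2 m - g 3 m = (c m).im := aux _
      rw [← Complex.ofReal_sub, ← Complex.ofReal_sub, e0, e1, mul_comm]
      exact (Complex.re_add_im _).symm
    rw [e]; ring
  have hk : ∀ k ∈ K, ‖∑ m ∈ s, c m * SS (δ + k - m)‖ ^ p ≤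
      4 ^ (p - 1) * ∑ i : Fin 4, ‖T i k‖ ^ p := by
    intro k _
    have h1 : ‖∑ m ∈ s, c m * SS (δ + k - m)‖ ≤ ∑ i : Fin 4, |‖T i k‖| := by
      rw [hdec, Fin.sum_univ_four]
      simp only [abs_norm]
      refine (norm_add_le _ _).trans ?_
      rw [norm_mul, Complex.norm_I, one_mul]
      linarith [norm_sub_le (T 0 k) (T 1 k), norm_sub_le (T 2 k) (T 3 k)]
    refine (Real.rpow_le_rpow (norm_nonneg _) h1 hp0.le).trans ?_
    have := Real.rpow_sum_le_const_mul_sum_rpow Finset.univ (fun i : Fin 4 => ‖T i k‖) hp1.le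
    simpa using this
  refine (Finset.sum_le_sum hk).trans ?_
  rw [← Finset.mul_sum, mul_assoc]
  gcongr
  rw [Finset.sum_comm]
  have hi : ∀ i : Fin 4, ∑ k ∈ K, ‖T i k‖ ^ p ≤ C * ∑ m ∈ s, ‖c m‖ ^ p := by
    intro i
    refine (h s (g i) (hg0 i) K δ).trans ?_
    gcongr with m _
    · exact hg0 i m
    · exact hgle i m
  refine (Finset.sum_le_sum fun i _ => hi i).trans (le_of_eq ?_)
  simp
  ring

/-- Fourier transform of the restriction to `[0, 2π]`. -/
noncomputable def Phi (f : ℝ → ℂ) (y : ℝ) : ℂ :=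
  (1 / (2 * (Real.pi : ℂ))) *
    ∫ t in (0:ℝ)..(2 * Real.pi), f t * Complex.exp (-Complex.I * (y : ℂ) * (t : ℂ))

theorem fourierCoef_eq_Phi (f : ℝ → ℂ) (k : ℤ) : fourierCoef f k = Phi f (k : ℝ) := by
  unfold fourierCoef Phi; simp

theorem fourier_two_pi (n : ℤ) (t : ℝ) :
    (fourier n (t : AddCircle (2 * π)) : ℂ) = Complex.exp (Complex.I * n * t) := by
  rw [fourier_coe_apply]
  congr 1
  have : (Real.pi : ℂ) ≠ 0 := by exact_mod_cast Real.pi_ne_zero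
  push_cast
  field_simp

/-- Uniqueness for integrable functions. -/
theorem unique_L1 (d : ℝ → ℂ) (hd : IntervalIntegrable d volume 0 (2 * π))
    (h : ∀ n : ℤ, ∫ t in (0:ℝ)..(2 * π), d t * Complex.exp (Complex.I * n * t) = 0) :
    ∀ᵐ t : ℝ, t ∈ Ioo 0 (2 * π) → d t = 0 := by
  have : Fact (0 < 2 * π) := ⟨Real.two_pi_pos⟩
  have hpi := Real.two_pi_pos
  have hInt : ∀ φ : C(AddCircle (2 * π), ℂ),
      IntervalIntegrable (fun t : ℝ => d t * φ (t : AddCircle (2 * π))) volume 0 (2 * π) := by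
    intro φ
    apply hd.mul_continuousOn
    exact (φ.continuous.comp (AddCircle.continuous_mk' _)).continuousOn
  let L : C(AddCircle (2 * π), ℂ) →ₗ[ℂ] ℂ :=
    { toFun := fun φ => ∫ t in (0:ℝ)..(2 * π), d t * φ (t : AddCircle (2 * π))
      map_add' := by
        intro φ ψ
        rw [← intervalIntegral.integral_add (hInt φ) (hInt ψ)]
        simp [mul_add]
      map_smul' := by
        intro c φ
        simp only [RingHom.id_apply, smul_eq_mul]
        rw [← intervalIntegral.integral_const_mul]
        congr 1
        ext t
        simp; ring }
  have hL : ∀ φ, ‖L φ‖ ≤ (∫ t in (0:ℝ)..(2 * π), ‖d t‖) * ‖φ‖ := by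
    intro φ
    refine (intervalIntegral.norm_integral_le_integral_norm hpi.le).trans ?_
    rw [← intervalIntegral.integral_mul_const]
    apply intervalIntegral.integral_mono_on hpi.le (hInt φ).norm (hd.norm.mul_const _)
    intro t _
    rw [norm_mul]
    gcongr
    exact φ.norm_coe_le_norm _
  let Lc := L.mkContinuous _ hL
  have hker : (⊤ : Submodule ℂ C(AddCircle (2 * π), ℂ)) ≤ LinearMap.ker Lc.toLinearMap := by
    rw [← span_fourier_closure_eq_top]
    apply Submodule.topologicalClosure_minimal
    · rw [Submodule.span_le]
      rintro _ ⟨n, rfl⟩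
      change ∫ t in (0:ℝ)..(2 * π), d t * fourier n (t : AddCircle (2 * π)) = 0
      simp only [fourier_two_pi]
      exact h n
    · exact Lc.isClosed_ker
  have hz : ∀ φ : C(AddCircle (2 * π), ℂ),
      ∫ t in (0:ℝ)..(2 * π), d t * φ (t : AddCircle (2 * π)) = 0 := fun φ => hker Submodule.mem_top
  have hdI : IntegrableOn d (Ioc 0 (2 * π)) := (intervalIntegrable_iff_integrableOn_Ioc_of_le hpi.le).1 hd
  apply isOpen_Ioo.ae_eq_zero_of_integral_contDiff_smul_eq_zero
  · exact (hdI.mono_set Ioo_subset_Ioc_self).locallyIntegrableOn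
  intro g hg _ hgs
  have hg0 : ∀ t, t ∉ Ioo 0 (2 * π) → g t = 0 := fun t ht =>
    image_eq_zero_of_notMem_tsupport fun h' => ht (hgs h')
  let φ : C(AddCircle (2 * π), ℂ) := ⟨AddCircle.liftIco (2 * π) 0 (fun t => (g t : ℂ)), by
    apply AddCircle.liftIco_zero_continuous
    · rw [hg0 0 (by simp), hg0 (2 * π) (by simp)]
    · exact (Complex.continuous_ofReal.comp hg.continuous).continuousOn⟩
  have := hz φ
  rw [intervalIntegral.integral_of_le hpi.le, integral_Ioc_eq_integral_Ioo] at this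
  rw [← this, ← setIntegral_eq_integral_of_forall_compl_eq_zero (s := Ioo 0 (2 * π))]
  · apply setIntegral_congr_fun measurableSet_Ioo
    intro t ht
    have e : φ (t : AddCircle (2 * π)) = (g t : ℂ) :=
      AddCircle.liftIco_coe_apply (p := 2 * π) (a := 0) (x := t)
        (f := fun t => (g t : ℂ))
        (by simpa using Ioo_subset_Ico_self ht)
    simp only [e]
    rw [Complex.real_smul, mul_comm]
  · intro t ht
    rw [hg0 t ht, zero_smul]

theorem Phi_hasSum (f : ℝ → ℂ) (hf : IntervalIntegrable f volume 0 (2 * π))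
    (hc : Summable fun k : ℤ => ‖fourierCoef f k‖ ^ (2 : ℝ)) (y : ℝ) :
    HasSum (fun m : ℤ => fourierCoef f m * SS (y - m)) (Phi f y) := by
  have : Fact (0 < 2 * π) := ⟨Real.two_pi_pos⟩
  have hpi := Real.two_pi_pos
  have hmem : Memℓp (fun k : ℤ => fourierCoef f k) 2 := memℓp_gen (by simpa using hc)
  let W : Lp ℂ 2 (AddCircle.haarAddCircle (T := 2 * π)) :=
    fourierBasis.repr.symm ⟨fun k : ℤ => fourierCoef f k, hmem⟩
  have hW : ∀ n, fourierCoeff (W : AddCircle (2 * π) → ℂ) n = fourierCoef f n := by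
    intro n
    rw [← fourierBasis_repr]
    simp [W]
  let w : ℝ → ℂ := fun t => W (t : AddCircle (2 * π))
  have hWint : Integrable (W : AddCircle (2 * π) → ℂ) volume := by
    have h1 : MemLp (W : AddCircle (2 * π) → ℂ) 1 AddCircle.haarAddCircle :=
      (Lp.memLp W).mono_exponent (by norm_num)
    rw [AddCircle.volume_eq_smul_haarAddCircle]
    exact (memLp_one_iff_integrable.1 h1).smul_measure ENNReal.ofReal_ne_top
  have hw : IntervalIntegrable w volume 0 (2 * π) := by
    rw [intervalIntegrable_iff_integrableOn_Ioc_of_le hpi.le]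
    have := (AddCircle.measurePreserving_mk (2 * π) 0)
    rw [zero_add] at this
    exact this.integrable_comp_of_integrable hWint
  have hexp : ∀ n : ℤ, ∀ g : ℝ → ℂ, IntervalIntegrable g volume 0 (2 * π) →
      IntervalIntegrable (fun t => g t * Complex.exp (Complex.I * n * t)) volume 0 (2 * π) := by
    intro n g hg
    apply hg.mul_continuousOn
    fun_prop
  have h2pi : (2 * (Real.pi : ℂ)) ≠ 0 := by
    have : (Real.pi : ℂ) ≠ 0 := by exact_mod_cast Real.pi_ne_zero
    simp
  have hae : ∀ᵐ t : ℝ, t ∈ Ioo 0 (2 * π) → f t - w t = 0 := by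
    apply unique_L1 _ (hf.sub hw)
    intro n
    simp only [sub_mul]
    rw [intervalIntegral.integral_sub (hexp n f hf) (hexp n w hw), sub_eq_zero]
    have h1 := hW (-n)
    rw [fourierCoeff_eq_intervalIntegral _ _ 0, zero_add] at h1
    unfold fourierCoef at h1
    simp only [neg_neg, fourier_two_pi, smul_eq_mul] at h1
    have h3 : (1 / (2 * π)) • (∫ x in (0:ℝ)..(2 * π), Complex.exp (Complex.I * n * x) * W (x : AddCircle (2 * π))) =
      (1 / (2 * (π : ℂ))) * ∫ t in (0:ℝ)..(2 * π), w t * Complex.exp (Complex.I * n * t) := by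
      rw [Complex.real_smul]
      congr 1
      · push_cast; rfl
      · congr 1
        ext t; ring
    rw [h3] at h1
    have := mul_left_cancel₀ (one_div_ne_zero h2pi) h1
    rw [this]
    congr 1
    ext t
    push_cast
    congr 2
    ring
  have hPhi : Phi f y = Phi w y := by
    unfold Phi
    congr 1
    rw [intervalIntegral.integral_of_le hpi.le, intervalIntegral.integral_of_le hpi.le,
      integral_Ioc_eq_integral_Ioo, integral_Ioc_eq_integral_Ioo]
    apply setIntegral_congr_ae measurableSet_Ioo
    filter_upwards [hae] with t ht hm
    rw [sub_eq_zero.1 (ht hm)]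
  -- the test function
  let e : ℝ → ℂ := fun t => Complex.exp (Complex.I * y * t)
  have he : MemLp (AddCircle.liftIoc (2 * π) 0 e) 2 (AddCircle.haarAddCircle (T := 2 * π)) := by
    apply MemLp.of_bound (C := 1)
    · apply Measurable.aestronglyMeasurable
      have h1 : Measurable (AddCircle.measurableEquivIoc (2 * π) 0) :=
        (AddCircle.measurableEquivIoc (2 * π) 0).measurable
      have h2 : Measurable e := by fun_prop
      exact (h2.comp measurable_subtype_coe).comp h1
    · apply Filter.Eventually.of_forall
      intro x
      have : ∀ t, ‖e t‖ = 1 := by intro t; simp [e, Complex.norm_exp]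
      exact (this _).le
  have hinner : ∀ (v : Lp ℂ 2 (AddCircle.haarAddCircle (T := 2 * π))) (g : AddCircle (2 * π) → ℂ),
      v =ᵐ[AddCircle.haarAddCircle] g →
      inner ℂ (he.toLp _) v = Phi (fun t => g (t : AddCircle (2 * π))) y := by
    intro v g hvg
    rw [L2.inner_def]
    have h1 : ∫ a, inner ℂ ((he.toLp _) a) (v a) ∂(AddCircle.haarAddCircle (T := 2 * π)) =
        ∫ a, inner ℂ (AddCircle.liftIoc (2 * π) 0 e a) (g a) ∂(AddCircle.haarAddCircle (T := 2 * π)) := by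
      apply integral_congr_ae
      filter_upwards [hvg, he.coeFn_toLp] with a h1 h2
      rw [h1, h2]
    rw [h1, AddCircle.integral_haarAddCircle, ← AddCircle.intervalIntegral_preimage _ 0, zero_add]
    unfold Phi
    rw [Complex.real_smul]
    congr 1
    · push_cast; simp
    · rw [intervalIntegral.integral_of_le hpi.le, intervalIntegral.integral_of_le hpi.le]
      apply setIntegral_congr_fun measurableSet_Ioc
      intro t ht
      simp only
      rw [AddCircle.liftIoc_coe_apply (p := 2 * π) (a := 0) (x := t) (by simpa using ht)]
      simp only [RCLike.inner_apply, e]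
      rw [← Complex.exp_conj]
      simp
  have hs := (hasSum_fourier_series_L2 W).mapL (innerSL ℂ (he.toLp _))
  rw [hPhi]
  have e1 : (innerSL ℂ (he.toLp _)) W = Phi w y := hinner W W (Filter.EventuallyEq.refl _ _)
  rw [e1] at hs
  have e2 : ∀ m : ℤ, innerSL ℂ (he.toLp _) (fourierCoeff (W : AddCircle (2 * π) → ℂ) m • fourierLp 2 m)
      = fourierCoef f m * SS (y - m) := by
    intro m
    rw [map_smul, hW, smul_eq_mul, innerSL_apply_apply, hinner _ _ (coeFn_fourierLp 2 m)]
    congr 1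
    unfold SS Phi
    congr 2
    ext t
    beta_reduce
    rw [fourier_two_pi, ← Complex.exp_add]
    congr 1
    push_cast
    ring
  simp only [e2] at hs
  exact hs

theorem star (p : ℝ) (hp1 : 1 < p) (hp2 : p < 2) : ∃ C : ℝ, 0 < C ∧
    ∀ (f : ℝ → ℂ) (_ : IntervalIntegrable f volume 0 (2 * π)) (δ : ℝ),
    ∑' k : ℤ, ‖Phi f (δ + k)‖ₑ ^ p ≤ ENNReal.ofReal C * ∑' k : ℤ, ‖Phi f k‖ₑ ^ p := by
  obtain ⟨C, hC, h⟩ := core_complex p hp1 hp2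
  refine ⟨C, hC, ?_⟩
  intro f hf δ
  have hp0 : 0 < p := by linarith
  by_cases htop : ∑' k : ℤ, ‖Phi f k‖ₑ ^ p = ∞
  · rw [htop, ENNReal.mul_top (by simpa using hC)]
    exact le_top
  have hcv : ∀ z : ℂ, ‖z‖ₑ ^ p = ENNReal.ofReal (‖z‖ ^ p) := by
    intro z
    rw [← ofReal_norm, ENNReal.ofReal_rpow_of_nonneg (norm_nonneg _) hp0.le]
  simp only [hcv] at htop ⊢
  have hsum : Summable fun k : ℤ => ‖Phi f k‖ ^ p := by
    have := ENNReal.summable_toReal htop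
    refine this.congr fun k => ?_
    rw [ENNReal.toReal_ofReal (by positivity)]
  have hsum2 : Summable fun k : ℤ => ‖fourierCoef f k‖ ^ (2 : ℝ) := by
    refine Summable.of_norm_bounded_eventually hsum ?_
    have ht := hsum.tendsto_cofinite_zero
    filter_upwards [ht.eventually (gt_mem_nhds one_pos)] with k hk
    rw [Real.norm_of_nonneg (by positivity), fourierCoef_eq_Phi]
    have h1 : ‖Phi f k‖ ≤ 1 := by
      by_contra hcon
      push Not at hcon
      have := Real.one_lt_rpow hcon hp0
      linarith
    exact Real.rpow_le_rpow_of_exponent_ge' (norm_nonneg _) h1 hp0.le hp2.le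
  rw [← ENNReal.ofReal_tsum_of_nonneg (fun k => by positivity) hsum,
    ← ENNReal.ofReal_mul hC.le, ENNReal.tsum_eq_iSup_sum]
  apply iSup_le
  intro K
  rw [← ENNReal.ofReal_sum_of_nonneg (fun k _ => by positivity)]
  apply ENNReal.ofReal_le_ofReal
  have hlim : Filter.Tendsto (fun s : Finset ℤ =>
      ∑ k ∈ K, ‖∑ m ∈ s, fourierCoef f m * SS (δ + k - m)‖ ^ p) Filter.atTop
      (nhds (∑ k ∈ K, ‖Phi f (δ + k)‖ ^ p)) := by
    apply tendsto_finsetSum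
    intro k _
    have := Phi_hasSum f hf hsum2 (δ + k)
    exact (Filter.Tendsto.norm this).rpow_const (Or.inr hp0.le)
  refine le_of_tendsto' hlim fun s => ?_
  refine (h s (fourierCoef f) K δ).trans ?_
  gcongr
  simp only [fourierCoef_eq_Phi]
  exact hsum.sum_le_tsum s fun k _ => by positivity

theorem lintegral_periodize (g : ℝ → ℝ≥0∞) (hg : Measurable g) :
    ∫⁻ y, g y = ∫⁻ δ in Ioc (0:ℝ) 1, ∑' k : ℤ, g (δ + k) := by
  rw [lintegral_tsum (fun k => by fun_prop)]
  have e : ∀ k : ℤ, ∫⁻ δ in Ioc (0:ℝ) 1, g (δ + k) = ∫⁻ y in Ioc (0 + (k : ℝ)) (0 + k + 1), g y := by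
    intro k
    have hmp := (measurePreserving_add_right (volume : Measure ℝ) (k : ℝ))
    have hemb := (MeasurableEquiv.addRight (k : ℝ)).measurableEmbedding
    rw [← hmp.setLIntegral_comp_preimage_emb hemb g]
    congr 2
    ext x
    simp [add_comm]
  simp only [e]
  rw [← lintegral_iUnion (fun k => measurableSet_Ioc) (pairwise_disjoint_Ioc_add_intCast (0:ℝ)),
    iUnion_Ioc_add_intCast, Measure.restrict_univ]

theorem Phi_mod (f : ℝ → ℂ) (δ y : ℝ) :
    Phi (fun t => f t * Complex.exp (-Complex.I * (δ : ℂ) * (t : ℂ))) y = Phi f (δ + y) := by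
  unfold Phi
  congr 2
  ext t
  rw [mul_assoc, ← Complex.exp_add]
  congr 2
  push_cast
  ring

theorem Phi_cont (f : ℝ → ℂ) (hf : IntervalIntegrable f volume 0 (2 * π)) : Continuous (Phi f) := by
  unfold Phi
  apply Continuous.const_mul
  apply intervalIntegral.continuous_of_dominated_interval (bound := fun t => ‖f t‖)
  · intro y
    have h1 : IntervalIntegrable (fun t : ℝ => f t * Complex.exp (-Complex.I * (y : ℂ) * (t : ℂ)))
        volume 0 (2 * π) := hf.mul_continuousOn (by fun_prop)
    exact (intervalIntegrable_iff.1 h1).aestronglyMeasurable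
  · intro y
    apply Filter.Eventually.of_forall
    intro t _
    rw [norm_mul, norm_exp_aux, mul_one]
  · exact hf.norm
  · apply Filter.Eventually.of_forall
    intro t _
    fun_prop

theorem two_sided (p : ℝ) (hp1 : 1 < p) (hp2 : p < 2) : ∃ C : ℝ, 0 < C ∧
    ∀ (f : ℝ → ℂ) (_ : IntervalIntegrable f volume 0 (2 * π)),
    (∑' k : ℤ, ‖Phi f k‖ₑ ^ p ≤ ENNReal.ofReal C * ∫⁻ y, ‖Phi f y‖ₑ ^ p) ∧
    (∫⁻ y, ‖Phi f y‖ₑ ^ p ≤ ENNReal.ofReal C * ∑' k : ℤ, ‖Phi f k‖ₑ ^ p) := by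
  obtain ⟨C, hC, h⟩ := star p hp1 hp2
  refine ⟨C, hC, ?_⟩
  intro f hf
  have hm : Measurable fun y => ‖Phi f y‖ₑ ^ p :=
    (Phi_cont f hf).measurable.enorm.pow_const p
  rw [lintegral_periodize _ hm]
  constructor
  · have h1 : ∀ δ : ℝ, ∑' k : ℤ, ‖Phi f k‖ₑ ^ p ≤
        ENNReal.ofReal C * ∑' k : ℤ, ‖Phi f (δ + k)‖ₑ ^ p := by
      intro δ
      have := h (fun t => f t * Complex.exp (-Complex.I * (δ : ℂ) * (t : ℂ)))
        (hf.mul_continuousOn (by fun_prop)) (-δ)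
      simpa only [Phi_mod, add_neg_cancel_left] using this
    have h2 : ∑' k : ℤ, ‖Phi f k‖ₑ ^ p = ∫⁻ δ in Ioc (0:ℝ) 1, ∑' k : ℤ, ‖Phi f k‖ₑ ^ p := by
      simp
    rw [h2, ← lintegral_const_mul' _ _ ENNReal.ofReal_ne_top]
    exact lintegral_mono h1
  · refine (lintegral_mono (h f hf)).trans ?_
    simp

theorem Phi_affine (a b u₁ v₁ u₂ v₂ : ℝ) (U V : ℝ → ℂ) (ha : a ≠ 0)
    (hI : Icc u₁ v₁ ⊆ Icc 0 (2 * Real.pi)) (hJ : Icc u₂ v₂ ⊆ Icc 0 (2 * Real.pi))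
    (hl : (fun t => a * t + b) '' Icc u₁ v₁ = Icc u₂ v₂)
    (hU : ∀ t ∈ Icc 0 (2 * Real.pi) \ Icc u₁ v₁, U t = 0)
    (hV : ∀ t ∈ Icc 0 (2 * Real.pi) \ Icc u₂ v₂, V t = 0)
    (hUV : ∀ t ∈ Icc u₁ v₁, U t = V (a * t + b)) (y : ℝ) :
    ‖Phi U y‖ₑ = ENNReal.ofReal |a⁻¹| * ‖Phi V (a⁻¹ * y)‖ₑ := by
  have hpi := Real.two_pi_pos
  have gen : ∀ (F : ℝ → ℂ) (u v x : ℝ), Icc u v ⊆ Icc 0 (2 * Real.pi) →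
      (∀ t ∈ Icc 0 (2 * Real.pi) \ Icc u v, F t = 0) →
      ∫ t in (0:ℝ)..(2 * Real.pi), F t * Complex.exp (-Complex.I * (x : ℂ) * (t : ℂ)) =
      ∫ t, (Icc u v).indicator F t * Complex.exp (-Complex.I * (x : ℂ) * (t : ℂ)) := by
    intro F u v x huv hF
    rw [intervalIntegral.integral_of_le hpi.le, ← integral_Icc_eq_integral_Ioc,
      ← setIntegral_eq_integral_of_forall_compl_eq_zero (s := Icc 0 (2 * π))
        (f := fun t => (Icc u v).indicator F t * Complex.exp (-Complex.I * (x : ℂ) * (t : ℂ)))]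
    · apply setIntegral_congr_fun measurableSet_Icc
      intro t ht
      by_cases h : t ∈ Icc u v
      · simp only [indicator_of_mem h]
      · simp only [indicator_of_notMem h, hF t ⟨ht, h⟩]
    · intro t ht
      rw [indicator_of_notMem (fun h => ht (huv h)), zero_mul]
  have hmem : ∀ t, a * t + b ∈ Icc u₂ v₂ ↔ t ∈ Icc u₁ v₁ := by
    intro t
    rw [← hl]
    constructor
    · rintro ⟨t', ht', h⟩
      simp only at h
      have : t' = t := mul_left_cancel₀ ha (add_right_cancel h)
      rwa [← this]
    · intro h
      exact ⟨t, h, rfl⟩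
  have hind : ∀ t, (Icc u₁ v₁).indicator U t = (Icc u₂ v₂).indicator V (a * t + b) := by
    intro t
    by_cases h : t ∈ Icc u₁ v₁
    · rw [indicator_of_mem h, indicator_of_mem ((hmem t).2 h), hUV t h]
    · rw [indicator_of_notMem h, indicator_of_notMem (fun h' => h ((hmem t).1 h'))]
  have key : Phi U y = (|a⁻¹| : ℝ) * (Complex.exp (-Complex.I * ((a⁻¹ * y : ℝ) : ℂ) * ((-b : ℝ) : ℂ)) *
      Phi V (a⁻¹ * y)) := by
    unfold Phi
    rw [gen U u₁ v₁ y hI hU, gen V u₂ v₂ _ hJ hV]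
    simp only [hind]
    let G : ℝ → ℂ := fun s => (Icc u₂ v₂).indicator V (s + b) *
      Complex.exp (-Complex.I * ((a⁻¹ * y : ℝ) : ℂ) * (s : ℂ))
    have e1 : ∀ t : ℝ, (Icc u₂ v₂).indicator V (a * t + b) * Complex.exp (-Complex.I * (y : ℂ) * (t : ℂ))
        = G (a * t) := by
      intro t
      simp only [G]
      congr 2
      have : (a : ℂ) ≠ 0 := by exact_mod_cast ha
      push_cast
      field_simp
    simp only [e1]
    rw [Measure.integral_comp_mul_left G a, Complex.real_smul]
    have e2 : ∫ s, G s = Complex.exp (-Complex.I * ((a⁻¹ * y : ℝ) : ℂ) * ((-b : ℝ) : ℂ)) *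
        ∫ t, (Icc u₂ v₂).indicator V t * Complex.exp (-Complex.I * ((a⁻¹ * y : ℝ) : ℂ) * (t : ℂ)) := by
      rw [← integral_sub_right_eq_self G b, ← integral_const_mul]
      congr 1
      ext s
      simp only [G, sub_add_cancel]
      rw [mul_left_comm, ← Complex.exp_add]
      congr 2
      push_cast
      ring
    rw [e2]
    ring
  rw [key, enorm_mul, enorm_mul, ← ofReal_norm (Complex.exp _), norm_exp_aux,
    ENNReal.ofReal_one, one_mul, ← ofReal_norm, Complex.norm_real, Real.norm_eq_abs, abs_abs]

/-- Lemma 8: if U, V ∈ A_p(𝕋) are supported on intervals I, J ⊆ [0,2π]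
and U = V ∘ l on I for an affine map l of I onto J with tangent coefficient a, then
‖U‖_{A_p} ≤ c_p·|a|^{-1/q}·‖V‖_{A_p}. -/
theorem statement13
    (p q : ℝ) (hp1 : 1 < p) (hp2 : p < 2) (hq : 1 / p + 1 / q = 1) :
    ∃ c : ℝ, 0 < c ∧
      ∀ (a b u₁ v₁ u₂ v₂ : ℝ) (U V : ℝ → ℂ),
        a ≠ 0 → u₁ ≤ v₁ →
        Icc u₁ v₁ ⊆ Icc 0 (2 * Real.pi) →
        Icc u₂ v₂ ⊆ Icc 0 (2 * Real.pi) →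
        -- l(t) = a·t + b maps I = [u₁,v₁] onto J = [u₂,v₂]
        ((fun t => a * t + b) '' Icc u₁ v₁ = Icc u₂ v₂) →
        -- U and V vanish outside I and J respectively
        (∀ t ∈ Icc 0 (2 * Real.pi) \ Icc u₁ v₁, U t = 0) →
        (∀ t ∈ Icc 0 (2 * Real.pi) \ Icc u₂ v₂, V t = 0) →
        -- U = V ∘ l on I
        (∀ t ∈ Icc u₁ v₁, U t = V (a * t + b)) →
        IntervalIntegrable U volume 0 (2 * Real.pi) →
        IntervalIntegrable V volume 0 (2 * Real.pi) →
        ApNorm p U ≤ ENNReal.ofReal (c * |a| ^ (-(1 / q))) * ApNorm p V := by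
  obtain ⟨C, hC, h⟩ := two_sided p hp1 hp2
  have hp0 : 0 < p := by linarith
  refine ⟨(C * C) ^ (1 / p), by positivity, ?_⟩
  intro a b u₁ v₁ u₂ v₂ U V ha _ hI hJ hl hU hV hUV hUi hVi
  have hap : 0 < |a| := abs_pos.2 ha
  have hai : 0 < |a⁻¹| := abs_pos.2 (inv_ne_zero ha)
  have hnorm : ∀ f : ℝ → ℂ, ApNorm p f = (∑' k : ℤ, ‖Phi f k‖ₑ ^ p) ^ (1 / p) := by
    intro f
    unfold ApNorm
    simp only [fourierCoef_eq_Phi]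
    rfl
  have hVm : Measurable fun y => ‖Phi V y‖ₑ ^ p :=
    (Phi_cont V hVi).measurable.enorm.pow_const p
  have hInt : ∫⁻ y, ‖Phi U y‖ₑ ^ p =
      ENNReal.ofReal (|a| ^ (1 - p)) * ∫⁻ y, ‖Phi V y‖ₑ ^ p := by
    have e1 : ∀ y, ‖Phi U y‖ₑ ^ p = ENNReal.ofReal (|a⁻¹| ^ p) * ‖Phi V (a⁻¹ * y)‖ₑ ^ p := by
      intro y
      rw [Phi_affine a b u₁ v₁ u₂ v₂ U V ha hI hJ hl hU hV hUV y,
        ENNReal.mul_rpow_of_nonneg _ _ hp0.le, ENNReal.ofReal_rpow_of_nonneg hai.le hp0.le]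
    simp only [e1]
    rw [lintegral_const_mul' _ _ ENNReal.ofReal_ne_top]
    have e2 : ∫⁻ y, ‖Phi V (a⁻¹ * y)‖ₑ ^ p = ENNReal.ofReal |a| * ∫⁻ y, ‖Phi V y‖ₑ ^ p := by
      have := lintegral_map (μ := volume) hVm (measurable_const_mul a⁻¹)
      rw [Real.map_volume_mul_left (inv_ne_zero ha), inv_inv, lintegral_smul_measure] at this
      rw [← this]; rfl
    rw [e2, ← mul_assoc, ← ENNReal.ofReal_mul (by positivity)]
    congr 2
    rw [abs_inv, Real.inv_rpow hap.le, Real.rpow_sub hap, Real.rpow_one]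
    ring
  have main : ∑' k : ℤ, ‖Phi U k‖ₑ ^ p ≤
      ENNReal.ofReal (C * C * |a| ^ (1 - p)) * ∑' k : ℤ, ‖Phi V k‖ₑ ^ p := by
    refine (h U hUi).1.trans ?_
    rw [hInt]
    refine (mul_le_mul_right (mul_le_mul_right (h V hVi).2 _) _).trans (le_of_eq ?_)
    rw [← mul_assoc, ← mul_assoc, ← ENNReal.ofReal_mul hC.le, ← ENNReal.ofReal_mul (by positivity)]
    congr 2
    ring
  rw [hnorm, hnorm]
  refine (ENNReal.rpow_le_rpow main (by positivity)).trans (le_of_eq ?_)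
  rw [ENNReal.mul_rpow_of_nonneg _ _ (by positivity),
    ENNReal.ofReal_rpow_of_nonneg (by positivity) (by positivity),
    Real.mul_rpow (by positivity) (by positivity), ← Real.rpow_mul hap.le]
  have e3 : (1 - p) * (1 / p) = -(1 / q) := by
    have : 1 / q = 1 - 1 / p := by linarith
    rw [this]; field_simp; ring
  rw [e3]
end

section
/- Let 1 < p < 2. There is a constant c_p > 0 such that for every real 2π-periodic function l that is linear on the interval (0,2π) (i.e., l(t) = at + b for t ∈ (0,2π)) and every f ∈ A_p(𝕋), one has e^{il}·f ∈ A_p(𝕋) and ‖e^{il}·f‖_{A_p(𝕋)} ≤ c_p · ‖f‖_{A_p(𝕋)}. The constant c_p is independent of f and l. -/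
open MeasureTheory Real Set
open scoped ENNReal

theorem ineqA (p : ℝ) (hp1 : 1 < p) (hp2 : p < 2) : ∃ A B : ℝ, 0 < A ∧ 0 < B ∧
    ∀ z : ℂ, 0 < z.re → ‖z‖ ^ p ≤ A * z.re ^ p - B * (z ^ (p : ℂ)).re := by
  have hpi := Real.pi_pos
  obtain ⟨θ, h1, h2⟩ : ∃ θ, π / 2 / p < θ ∧ θ < π / 2 := by
    apply exists_between
    rw [div_lt_iff₀ (by linarith)]; nlinarith
  have h3 : π / 2 < p * θ := by rw [div_lt_iff₀ (by linarith)] at h1; linarith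
  have hθ : 0 < θ := lt_trans (by positivity) h1
  have h4 : p * θ < π := by nlinarith
  have hc : Real.cos (p * θ) < 0 := Real.cos_neg_of_pi_div_two_lt_of_lt h3 (by linarith)
  have hc2 : 0 < Real.cos θ := Real.cos_pos_of_mem_Ioo ⟨by linarith, h2⟩
  set B : ℝ := (-Real.cos (p * θ))⁻¹ with hB
  have hBpos : 0 < B := inv_pos.mpr (by linarith)
  have hBc : B * (-Real.cos (p * θ)) = 1 := inv_mul_cancel₀ (by linarith)
  refine ⟨(1 + B) * (Real.cos θ ^ p)⁻¹, B, by positivity, hBpos, fun z hz => ?_⟩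
  have hz0 : z ≠ 0 := by rintro rfl; simp at hz
  have harg : |z.arg| < π / 2 := Complex.abs_arg_lt_pi_div_two_iff.2 (Or.inl hz)
  have hre : z.re = ‖z‖ * Real.cos |z.arg| := by rw [Real.cos_abs, Complex.norm_mul_cos_arg]
  have hcz : 0 < Real.cos |z.arg| := Real.cos_pos_of_mem_Ioo ⟨by linarith [abs_nonneg z.arg], harg⟩
  have hpow : (z ^ (p : ℂ)).re = ‖z‖ ^ p * Real.cos (p * |z.arg|) := by
    rw [Complex.cpow_ofReal_re, ← Real.cos_abs (z.arg * p), abs_mul, abs_of_pos (by linarith : 0 < p),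
      mul_comm p]
  rw [hpow, hre, Real.mul_rpow (norm_nonneg _) hcz.le]
  have key : 1 ≤ (1 + B) * (Real.cos θ ^ p)⁻¹ * Real.cos |z.arg| ^ p
      - B * Real.cos (p * |z.arg|) := by
    set φ := |z.arg|
    have hφ0 : 0 ≤ φ := abs_nonneg _
    rcases le_total θ φ with h | h
    · have : Real.cos (p * φ) ≤ Real.cos (p * θ) :=
        Real.cos_le_cos_of_nonneg_of_le_pi (by positivity) (by nlinarith) (by nlinarith)
      have h5 : 0 ≤ (1 + B) * (Real.cos θ ^ p)⁻¹ * Real.cos φ ^ p := by positivity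
      nlinarith
    · have : Real.cos θ ≤ Real.cos φ :=
        Real.cos_le_cos_of_nonneg_of_le_pi (by positivity) (by linarith) h
      have h6 : Real.cos θ ^ p ≤ Real.cos φ ^ p := Real.rpow_le_rpow hc2.le this (by linarith)
      have h7 : 1 ≤ (Real.cos θ ^ p)⁻¹ * Real.cos φ ^ p := by
        rw [inv_mul_eq_div, le_div_iff₀ (by positivity)]; linarith
      have := Real.cos_le_one (p * φ)
      nlinarith
  have := mul_le_mul_of_nonneg_left key (Real.rpow_nonneg (norm_nonneg z) p)
  linarith

noncomputable def pk (k : ℤ) : ℝ := 1 / ((k : ℝ) ^ 2 + 1)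

theorem pk_pos (k : ℤ) : 0 < pk k := by unfold pk; positivity

theorem pk_neg (k : ℤ) : pk (-k) = pk k := by simp [pk]

theorem pk_summable : Summable pk := by
  have h : Summable (fun n : ℕ => 1 / ((n : ℝ) ^ 2 + 1)) := by
    refine Summable.of_nonneg_of_le (fun n => by positivity) (fun n => ?_)
      ((Real.summable_one_div_nat_pow (p := 2)).2 (by norm_num) |>.mul_left 2 |>.add
        (summable_of_ne_finset_zero (s := {0}) (f := fun n : ℕ => if n = 0 then (1 : ℝ) else 0)
          (by intro b hb; simp at hb; simp [hb])))
    rcases Nat.eq_zero_or_pos n with rfl | hn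
    · simp
    · have : (1 : ℝ) ≤ n := by exact_mod_cast hn
      rw [if_neg (by omega), add_zero, mul_one_div, div_le_div_iff₀ (by positivity) (by positivity)]
      nlinarith
  apply Summable.of_nat_of_neg
  · simpa [pk] using h
  · simpa [pk] using h

theorem young (p : ℝ) (hp1 : 1 < p) : ∃ W : ℝ, 0 < W ∧ ∀ (S T : Finset ℤ) (c : ℤ → ℝ),
    (∀ n, 0 ≤ c n) → ∑ m ∈ T, (∑ n ∈ S, c n * pk (m - n)) ^ p ≤ W * ∑ n ∈ S, c n ^ p := by
  set W := ∑' k, pk k with hW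
  have hWpos : 0 < W := pk_summable.tsum_pos (fun i => (pk_pos i).le) 0 (pk_pos 0)
  have hsum : ∀ (S : Finset ℤ) (m : ℤ), ∑ n ∈ S, pk (m - n) ≤ W := by
    intro S m
    have h := ((Equiv.subLeft m).summable_iff (f := pk)).2 pk_summable
    have h2 := (Equiv.subLeft m).tsum_eq pk
    rw [hW, ← h2]
    exact h.sum_le_tsum S (fun i _ => (pk_pos _).le)
  refine ⟨W ^ (p - 1) * W, by positivity, fun S T c hc => ?_⟩
  have h1 : ∀ m, (∑ n ∈ S, c n * pk (m - n)) ^ p ≤ W ^ (p - 1) * ∑ n ∈ S, pk (m - n) * c n ^ p := by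
    intro m
    have h := Real.inner_le_weight_mul_Lp_of_nonneg S hp1.le (fun n => pk (m - n)) c
      (fun n => (pk_pos _).le) hc
    have hs0 : 0 ≤ ∑ n ∈ S, pk (m - n) := Finset.sum_nonneg fun n _ => (pk_pos _).le
    have hs1 : 0 ≤ ∑ n ∈ S, pk (m - n) * c n ^ p := Finset.sum_nonneg fun n _ =>
      mul_nonneg (pk_pos _).le (Real.rpow_nonneg (hc n) _)
    have h' := Real.rpow_le_rpow (Finset.sum_nonneg fun n _ => mul_nonneg (pk_pos _).le (hc n)) h
      (by linarith : 0 ≤ p)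
    rw [Real.mul_rpow (by positivity) (by positivity), ← Real.rpow_mul hs0, ← Real.rpow_mul hs1,
      inv_mul_cancel₀ (by linarith), Real.rpow_one,
      (by field_simp : (1 - p⁻¹) * p = p - 1)] at h'
    simp_rw [mul_comm (c _)]
    refine h'.trans (mul_le_mul_of_nonneg_right ?_ hs1)
    exact Real.rpow_le_rpow hs0 (hsum S m) (by linarith)
  calc _ ≤ ∑ m ∈ T, W ^ (p - 1) * ∑ n ∈ S, pk (m - n) * c n ^ p := Finset.sum_le_sum fun m _ => h1 m
    _ = W ^ (p - 1) * ∑ n ∈ S, (∑ m ∈ T, pk (n - m)) * c n ^ p := by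
      rw [← Finset.mul_sum, Finset.sum_comm]
      simp_rw [Finset.sum_mul]
      congr 1
      refine Finset.sum_congr rfl fun n _ => Finset.sum_congr rfl fun m _ => ?_
      rw [← pk_neg, neg_sub]
    _ ≤ W ^ (p - 1) * ∑ n ∈ S, W * c n ^ p := by
      gcongr with n hn
      · exact Real.rpow_nonneg (hc n) _
      · exact hsum T n
    _ = _ := by rw [← Finset.mul_sum]; ring

noncomputable def FF (S : Finset ℤ) (c : ℤ → ℝ) (z : ℂ) : ℂ :=
  ∑ n ∈ S, (c n : ℂ) * (Complex.I / (z - n))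

theorem FF_re (S : Finset ℤ) (c : ℤ → ℝ) (z : ℂ) :
    (FF S c z).re = ∑ n ∈ S, c n * (z.im / Complex.normSq (z - n)) := by
  unfold FF
  rw [Complex.re_sum]
  refine Finset.sum_congr rfl fun n _ => ?_
  rw [Complex.re_ofReal_mul, Complex.div_re]
  simp

theorem sub_int_ne {z : ℂ} (hz : 0 < z.im) (n : ℤ) : z - n ≠ 0 := by
  intro h
  have := congrArg Complex.im h
  simp at this
  linarith

theorem FF_re_pos (S : Finset ℤ) (c : ℤ → ℝ) (hc : ∀ n, 0 ≤ c n) (hS : ∃ n ∈ S, 0 < c n) (z : ℂ)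
    (hz : 0 < z.im) : 0 < (FF S c z).re := by
  rw [FF_re]
  obtain ⟨n, hn, hcn⟩ := hS
  have hq : ∀ n : ℤ, 0 < z.im / Complex.normSq (z - n) := fun n =>
    div_pos hz (Complex.normSq_pos.2 (sub_int_ne hz n))
  exact Finset.sum_pos' (fun i _ => mul_nonneg (hc i) (hq i).le) ⟨n, hn, mul_pos hcn (hq n)⟩

theorem FF_diff (S : Finset ℤ) (c : ℤ → ℝ) (z : ℂ) (hz : 0 < z.im) :
    DifferentiableAt ℂ (FF S c) z := by
  unfold FF
  apply DifferentiableAt.fun_sum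
  intro n _
  have := sub_int_ne hz n
  fun_prop (disch := assumption)

theorem FFp_diff (p : ℝ) (S : Finset ℤ) (c : ℤ → ℝ) (hc : ∀ n, 0 ≤ c n) (hS : ∃ n ∈ S, 0 < c n)
    (z : ℂ) (hz : 0 < z.im) :
    DifferentiableAt ℂ (fun z => FF S c z ^ (p : ℂ)) z :=
  (FF_diff S c z hz).cpow_const (Or.inl (FF_re_pos S c hc hS z hz))

theorem FF_bound (S : Finset ℤ) (c : ℤ → ℝ) (hc : ∀ n, 0 ≤ c n) : ∃ M : ℝ, 0 < M ∧ ∀ R, M ≤ R →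
    ∀ z : ℂ, R ≤ ‖z‖ → ‖FF S c z‖ ≤ (2 * ∑ n ∈ S, c n) / R := by
  refine ⟨2 * ∑ n ∈ S, |(n : ℝ)| + 1, by positivity, fun R hR z hz => ?_⟩
  have hR0 : 0 < R := lt_of_lt_of_le (by positivity) hR
  unfold FF
  refine (norm_sum_le _ _).trans ?_
  rw [mul_comm 2, Finset.sum_mul, Finset.sum_div]
  refine Finset.sum_le_sum fun n hn => ?_
  have h1 : |(n : ℝ)| ≤ ∑ n ∈ S, |(n : ℝ)| :=
    Finset.single_le_sum (f := fun n : ℤ => |(n : ℝ)|) (fun _ _ => abs_nonneg _) hn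
  have h2 : ‖z‖ - ‖(n : ℂ)‖ ≤ ‖z - n‖ := norm_sub_norm_le _ _
  have h3 : ‖(n : ℂ)‖ = |(n : ℝ)| := Complex.norm_intCast n
  have h4 : R / 2 ≤ ‖z - n‖ := by rw [h3] at h2; linarith
  rw [norm_mul, norm_div, Complex.norm_real, Complex.norm_I, Real.norm_of_nonneg (hc n), mul_div_assoc]
  apply mul_le_mul_of_nonneg_left _ (hc n)
  rw [div_le_div_iff₀ (by linarith) hR0]
  linarith

theorem contour (p : ℝ) (hp1 : 1 < p) (S : Finset ℤ) (c : ℤ → ℝ) (hc : ∀ n, 0 ≤ c n)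
    (hS : ∃ n ∈ S, 0 < c n) :
    Filter.Tendsto (fun N : ℕ => ∫ x in (-(N : ℝ))..N, FF S c (x + Complex.I) ^ (p : ℂ))
      Filter.atTop (nhds 0) := by
  obtain ⟨M, hM, hb⟩ := FF_bound S c hc
  set Q := 2 * ∑ n ∈ S, c n with hQ
  have hQ0 : 0 ≤ Q := mul_nonneg (by norm_num) (Finset.sum_nonneg fun n _ => hc n)
  have hlim : Filter.Tendsto (fun N : ℕ => 4 * Q ^ p * (N : ℝ) ^ (-(p - 1))) Filter.atTop (nhds 0) := by
    have := ((tendsto_rpow_neg_atTop (by linarith : 0 < p - 1)).comp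
      tendsto_natCast_atTop_atTop).const_mul (4 * Q ^ p)
    simpa using this
  refine squeeze_zero_norm' ?_ hlim
  filter_upwards [Filter.eventually_ge_atTop (⌈M⌉₊ + 1)] with N hN
  have hNM : M ≤ N := (Nat.le_ceil M).trans (by exact_mod_cast (by omega))
  have hN0 : (0 : ℝ) < N := lt_of_lt_of_le hM hNM
  have hpt : ∀ z : ℂ, (N : ℝ) ≤ ‖z‖ → ‖FF S c z ^ (p : ℂ)‖ ≤ (Q / N) ^ p := by
    intro z hz
    rw [Complex.norm_cpow_real]
    exact Real.rpow_le_rpow (norm_nonneg _) (hb N hNM z hz) (by linarith)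
  have H := Complex.integral_boundary_rect_eq_zero_of_differentiableOn
    (fun z => FF S c z ^ (p : ℂ)) (⟨-N, 1⟩) (⟨N, N + 1⟩) (by
      intro z hz
      apply (FFp_diff p S c hc hS z _).differentiableWithinAt
      have := hz.2
      simp only [Set.mem_preimage] at this
      rw [Set.uIcc_of_le (by linarith)] at this
      linarith [this.1])
  simp only [Complex.ofReal_one, one_mul] at H
  have e1 := intervalIntegral.norm_integral_le_of_norm_le_const (a := -(N:ℝ)) (b := N)
    (f := fun x : ℝ => FF S c (x + ((N + 1 : ℝ) : ℂ) * Complex.I) ^ (p : ℂ)) (C := (Q / N) ^ p) (by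
      intro x _
      apply hpt
      refine le_trans ?_ (Complex.abs_im_le_norm _)
      simp
      rw [abs_of_pos (by linarith)]; linarith)
  have e2 := intervalIntegral.norm_integral_le_of_norm_le_const (a := 1) (b := (N:ℝ) + 1)
    (f := fun y : ℝ => FF S c (((N : ℝ) : ℂ) + y * Complex.I) ^ (p : ℂ)) (C := (Q / N) ^ p) (by
      intro x _
      apply hpt
      refine le_trans ?_ (Complex.abs_re_le_norm _)
      simp)
  have e3 := intervalIntegral.norm_integral_le_of_norm_le_const (a := 1) (b := (N:ℝ) + 1)
    (f := fun y : ℝ => FF S c (((-N : ℝ) : ℂ) + y * Complex.I) ^ (p : ℂ)) (C := (Q / N) ^ p) (by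
      intro x _
      apply hpt
      refine le_trans ?_ (Complex.abs_re_le_norm _)
      simp)
  rw [abs_of_pos (by linarith)] at e1 e2 e3
  set I0 := ∫ x in (-(N : ℝ))..N, FF S c (x + Complex.I) ^ (p : ℂ)
  set I1 := ∫ x in (-(N : ℝ))..N, FF S c (x + ((N + 1 : ℝ) : ℂ) * Complex.I) ^ (p : ℂ)
  set I2 := ∫ y in (1 : ℝ)..(N + 1), FF S c (((N : ℝ) : ℂ) + y * Complex.I) ^ (p : ℂ)
  set I3 := ∫ y in (1 : ℝ)..(N + 1), FF S c (((-N : ℝ) : ℂ) + y * Complex.I) ^ (p : ℂ)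
  have : I0 = I1 - Complex.I • I2 + Complex.I • I3 := by linear_combination H
  rw [this]
  have n1 := norm_add_le (I1 - Complex.I • I2) (Complex.I • I3)
  have n2 := norm_sub_le I1 (Complex.I • I2)
  rw [norm_smul, Complex.norm_I, one_mul] at n1 n2
  have hfin : (Q / N) ^ p * (4 * N) = 4 * Q ^ p * (N : ℝ) ^ (-(p - 1)) := by
    rw [Real.div_rpow hQ0 hN0.le, neg_sub, Real.rpow_sub hN0, Real.rpow_one]; ring
  rw [← hfin]
  linarith

theorem FF_cont (S : Finset ℤ) (c : ℤ → ℝ) : Continuous (fun x : ℝ => FF S c (x + Complex.I)) := by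
  rw [continuous_iff_continuousAt]
  intro x
  exact ContinuousAt.comp (f := fun x : ℝ => (x + Complex.I : ℂ))
    (FF_diff S c _ (by simp)).continuousAt (by fun_prop)

theorem FFp_cont (p : ℝ) (S : Finset ℤ) (c : ℤ → ℝ) (hc : ∀ n, 0 ≤ c n) (hS : ∃ n ∈ S, 0 < c n) :
    Continuous (fun x : ℝ => FF S c (x + Complex.I) ^ (p : ℂ)) := by
  rw [continuous_iff_continuousAt]
  intro x
  exact ContinuousAt.comp (f := fun x : ℝ => (x + Complex.I : ℂ))
    (FFp_diff p S c hc hS _ (by simp)).continuousAt (by fun_prop)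

theorem quad_cmp (m n : ℤ) (x : ℝ) (h1 : (m : ℝ) ≤ x) (h2 : x ≤ m + 1) :
    ((m - n : ℤ) : ℝ) ^ 2 + 1 ≤ 3 * ((x - n) ^ 2 + 1) := by
  push_cast
  nlinarith [sq_nonneg ((x - n) + (x - m)), sq_nonneg (x - n)]

theorem nsq (n : ℤ) (x : ℝ) : Complex.normSq (x + Complex.I - n) = (x - n) ^ 2 + 1 := by
  rw [Complex.normSq_apply]; simp; ring

theorem FF_re_le (S : Finset ℤ) (c : ℤ → ℝ) (hc : ∀ n, 0 ≤ c n) (m : ℤ) (x : ℝ)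
    (h1 : (m : ℝ) ≤ x) (h2 : x ≤ m + 1) :
    (FF S c (x + Complex.I)).re ≤ 3 * ∑ n ∈ S, c n * pk (m - n) := by
  rw [FF_re, Finset.mul_sum]
  refine Finset.sum_le_sum fun n _ => ?_
  rw [nsq, mul_left_comm]
  apply mul_le_mul_of_nonneg_left _ (hc n)
  have := quad_cmp m n x h1 h2
  simp only [pk, Complex.add_im, Complex.ofReal_im, Complex.I_im, zero_add]
  rw [mul_one_div, div_le_div_iff₀ (by positivity) (by positivity)]
  linarith

theorem FF_diff_le (S : Finset ℤ) (c : ℤ → ℝ) (hc : ∀ n, 0 ≤ c n) (m : ℤ) (x : ℝ)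
    (h1 : (m : ℝ) ≤ x) (h2 : x ≤ m + 1) :
    ‖FF S c (m + Complex.I) - FF S c (x + Complex.I)‖ ≤ 3 * ∑ n ∈ S, c n * pk (m - n) := by
  unfold FF
  rw [← Finset.sum_sub_distrib, Finset.mul_sum]
  refine (norm_sum_le _ _).trans (Finset.sum_le_sum fun n _ => ?_)
  rw [← mul_sub, norm_mul, Complex.norm_real, Real.norm_of_nonneg (hc n), mul_left_comm]
  apply mul_le_mul_of_nonneg_left _ (hc n)
  have q := quad_cmp m n x h1 h2
  have nz1 : (x + Complex.I - n : ℂ) ≠ 0 := sub_int_ne (by simp) n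
  have nz2 : (m + Complex.I - n : ℂ) ≠ 0 := sub_int_ne (by simp) n
  have e1 : ‖(x + Complex.I - n : ℂ)‖ ^ 2 = (x - n) ^ 2 + 1 := by
    rw [← Complex.normSq_eq_norm_sq, nsq]
  have e2 : ‖(m + Complex.I - n : ℂ)‖ ^ 2 = ((m - n : ℤ) : ℝ) ^ 2 + 1 := by
    have := nsq n (m : ℝ)
    rw [← Complex.normSq_eq_norm_sq]
    push_cast at *
    exact this
  have : Complex.I / (m + Complex.I - n : ℂ) - Complex.I / (x + Complex.I - n) =
      Complex.I * ((x - m : ℝ) : ℂ) / ((m + Complex.I - n) * (x + Complex.I - n)) := by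
    field_simp; push_cast; ring
  rw [this, norm_div, norm_mul, norm_mul, Complex.norm_I, one_mul, Complex.norm_real,
    Real.norm_of_nonneg (by linarith)]
  unfold pk
  rw [← e2] at q ⊢
  have p1 := norm_pos_iff.2 nz1
  have p2 := norm_pos_iff.2 nz2
  set u := ‖(x + Complex.I - n : ℂ)‖
  set v := ‖(m + Complex.I - n : ℂ)‖
  have huv : v ≤ 3 * u := by
    apply le_of_sq_le_sq _ (by positivity)
    nlinarith
  rw [mul_one_div, div_le_div_iff₀ (by positivity) (by positivity)]
  have : v * v ≤ v * (3 * u) := mul_le_mul_of_nonneg_left huv p2.le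
  nlinarith [mul_pos p1 p2]

theorem add_rpow_le (p : ℝ) (hp : 1 ≤ p) (a b : ℝ) (ha : 0 ≤ a) (hb : 0 ≤ b) :
    (a + b) ^ p ≤ 2 ^ (p - 1) * (a ^ p + b ^ p) := by
  have := NNReal.rpow_add_le_mul_rpow_add_rpow ⟨a, ha⟩ ⟨b, hb⟩ hp
  exact_mod_cast this

theorem lineBound (p : ℝ) (hp1 : 1 < p) (hp2 : p < 2) : ∃ C : ℝ, 0 < C ∧
    ∀ (S T : Finset ℤ) (c : ℤ → ℝ), (∀ n, 0 ≤ c n) →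
      ∑ m ∈ T, ‖FF S c (m + Complex.I)‖ ^ p ≤ C * ∑ n ∈ S, c n ^ p := by
  obtain ⟨A, B, hA, hB, hAB⟩ := ineqA p hp1 hp2
  obtain ⟨W, hW, hyoung⟩ := young p hp1
  refine ⟨2 ^ (p - 1) * ((A + 1) * 3 ^ p * W), by positivity, fun S T c hc => ?_⟩
  have hsum0 : 0 ≤ ∑ n ∈ S, c n ^ p := Finset.sum_nonneg fun n _ => Real.rpow_nonneg (hc n) _
  by_cases hS : ∃ n ∈ S, 0 < c n
  swap
  · have h0 : ∀ n ∈ S, c n = 0 := fun n hn => le_antisymm (not_lt.1 fun h => hS ⟨n, hn, h⟩) (hc n)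
    have : ∀ z, FF S c z = 0 := fun z => Finset.sum_eq_zero fun n hn => by simp [h0 n hn]
    simp only [this, norm_zero]
    rw [Real.zero_rpow (by linarith)]
    simp only [Finset.sum_const_zero]
    positivity
  set P : ℤ → ℝ := fun m => ∑ n ∈ S, c n * pk (m - n) with hP
  have hP0 : ∀ m, 0 ≤ P m := fun m => Finset.sum_nonneg fun n _ => mul_nonneg (hc n) (pk_pos _).le
  set J : ℕ → ℂ := fun N => ∫ x in (-(N : ℝ))..N, FF S c (x + Complex.I) ^ (p : ℂ) with hJ
  have hJlim : Filter.Tendsto J Filter.atTop (nhds 0) := contour p hp1 S c hc hS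
  have hcF := FF_cont S c
  have hcN : Continuous (fun x : ℝ => ‖FF S c (x + Complex.I)‖ ^ p) :=
    hcF.norm.rpow_const (fun _ => Or.inr (by linarith))
  have hcR : Continuous (fun x : ℝ => (FF S c (x + Complex.I)).re ^ p) :=
    (Complex.continuous_re.comp hcF).rpow_const (fun _ => Or.inr (by linarith))
  have hcP := FFp_cont p S c hc hS
  have hlim : Filter.Tendsto (fun N => 2 ^ (p - 1) * ((A + 1) * 3 ^ p * (W * ∑ n ∈ S, c n ^ p)
      + B * ‖J N‖)) Filter.atTop (nhds (2 ^ (p - 1) * ((A + 1) * 3 ^ p * (W * ∑ n ∈ S, c n ^ p)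
      + B * ‖(0 : ℂ)‖))) := ((hJlim.norm.const_mul B).const_add _).const_mul _
  have hgoal : 2 ^ (p - 1) * ((A + 1) * 3 ^ p * (W * ∑ n ∈ S, c n ^ p) + B * ‖(0 : ℂ)‖)
      = 2 ^ (p - 1) * ((A + 1) * 3 ^ p * W) * ∑ n ∈ S, c n ^ p := by rw [norm_zero]; ring
  rw [hgoal] at hlim
  refine ge_of_tendsto hlim ?_
  filter_upwards [Filter.eventually_ge_atTop (∑ m ∈ T, m.natAbs + 1)] with N hN
  -- the points
  let a : ℕ → ℤ := fun k => (k : ℤ) - N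
  have ainj : Function.Injective a := fun i j h => by simp only [a] at h; omega
  have hTsub : T ⊆ (Finset.range (2 * N)).map ⟨a, ainj⟩ := by
    intro m hm
    have h1 : m.natAbs ≤ ∑ m ∈ T, m.natAbs :=
      Finset.single_le_sum (f := fun m : ℤ => m.natAbs) (fun _ _ => Nat.zero_le _) hm
    simp only [Finset.mem_map, Finset.mem_range, Function.Embedding.coeFn_mk, a]
    exact ⟨(m + N).toNat, by omega, by omega⟩
  have hPsum : ∑ k ∈ Finset.range (2 * N), (3 * P (a k)) ^ p ≤ 3 ^ p * (W * ∑ n ∈ S, c n ^ p) := by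
    have := hyoung S ((Finset.range (2 * N)).map ⟨a, ainj⟩) c hc
    rw [Finset.sum_map] at this
    simp_rw [Real.mul_rpow (by norm_num : (0:ℝ) ≤ 3) (hP0 _)]
    rw [← Finset.mul_sum]
    exact mul_le_mul_of_nonneg_left this (by positivity)
  have hsplit : ∀ f : ℝ → ℝ, Continuous f → ∑ k ∈ Finset.range (2 * N), ∫ x in (a k : ℝ)..(a k : ℝ) + 1, f x
      = ∫ x in (-(N : ℝ))..N, f x := by
    intro f hf
    have := intervalIntegral.sum_integral_adjacent_intervals (f := f) (μ := volume)
      (a := fun k : ℕ => (a k : ℝ)) (n := 2 * N) (fun k _ => hf.intervalIntegrable _ _)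
    have ea : ∀ k : ℕ, ((a (k + 1) : ℤ) : ℝ) = a k + 1 := fun k => by simp [a]; ring
    simp only [ea] at this
    rw [this]
    congr 1
    · simp [a]
    · simp [a]; ring
  have s1 : ∀ m : ℤ, ‖FF S c (m + Complex.I)‖ ^ p ≤
      2 ^ (p - 1) * ((∫ x in (m : ℝ)..(m : ℝ) + 1, ‖FF S c (x + Complex.I)‖ ^ p) + (3 * P m) ^ p) := by
    intro m
    have h : ∀ x ∈ Icc (m : ℝ) (m + 1), ‖FF S c (m + Complex.I)‖ ^ p ≤
        2 ^ (p - 1) * (‖FF S c (x + Complex.I)‖ ^ p + (3 * P m) ^ p) := by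
      intro x hx
      refine le_trans ?_ (add_rpow_le p hp1.le _ _ (norm_nonneg _) (by have := hP0 m; positivity))
      apply Real.rpow_le_rpow (norm_nonneg _) _ (by linarith)
      have e1 := FF_diff_le S c hc m x hx.1 hx.2
      have e2 := norm_sub_norm_le (FF S c (m + Complex.I)) (FF S c (x + Complex.I))
      simp only [hP]; linarith
    have := intervalIntegral.integral_mono_on (μ := volume) (by linarith : (m : ℝ) ≤ m + 1)
      (f := fun _ => ‖FF S c (m + Complex.I)‖ ^ p)
      (g := fun x : ℝ => 2 ^ (p - 1) * (‖FF S c (x + Complex.I)‖ ^ p + (3 * P m) ^ p))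
      intervalIntegrable_const
      ((continuous_const.mul (hcN.add continuous_const)).intervalIntegrable _ _) h
    rw [intervalIntegral.integral_const_mul, intervalIntegral.integral_add
      (hcN.intervalIntegrable _ _) intervalIntegrable_const] at this
    simpa using this
  have s2 : ∀ m : ℤ, (∫ x in (m : ℝ)..(m : ℝ) + 1, (FF S c (x + Complex.I)).re ^ p) ≤ (3 * P m) ^ p := by
    intro m
    have := intervalIntegral.integral_mono_on (μ := volume) (by linarith : (m : ℝ) ≤ m + 1)
      (f := fun x : ℝ => (FF S c (x + Complex.I)).re ^ p)
      (g := fun x : ℝ => (3 * P m) ^ p)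
      (hcR.intervalIntegrable _ _) intervalIntegrable_const (fun x hx => by
        apply Real.rpow_le_rpow (FF_re_pos S c hc hS _ (by simp)).le _ (by linarith)
        exact FF_re_le S c hc m x hx.1 hx.2)
    simpa using this
  have s3 : (∫ x in (-(N : ℝ))..N, ‖FF S c (x + Complex.I)‖ ^ p) ≤
      A * (∫ x in (-(N : ℝ))..N, (FF S c (x + Complex.I)).re ^ p) + B * ‖J N‖ := by
    have hcPre : Continuous (fun x : ℝ => (FF S c (x + Complex.I) ^ (p : ℂ)).re) :=
      Complex.continuous_re.comp hcP
    have := intervalIntegral.integral_mono_on (μ := volume)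
      (by linarith [(Nat.cast_nonneg N : (0:ℝ) ≤ N)] : (-(N : ℝ)) ≤ N)
      (f := fun x : ℝ => ‖FF S c (x + Complex.I)‖ ^ p)
      (g := fun x : ℝ => A * (FF S c (x + Complex.I)).re ^ p
        - B * (FF S c (x + Complex.I) ^ (p : ℂ)).re)
      (hcN.intervalIntegrable _ _)
      (((continuous_const.mul hcR).sub (continuous_const.mul hcPre)).intervalIntegrable _ _)
      (fun x _ => hAB _ (FF_re_pos S c hc hS _ (by simp)))
    rw [intervalIntegral.integral_sub ((hcR.intervalIntegrable _ _).const_mul A)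
      ((hcPre.intervalIntegrable _ _).const_mul B),
      intervalIntegral.integral_const_mul, intervalIntegral.integral_const_mul] at this
    have hre : (∫ x in (-(N : ℝ))..N, (FF S c (x + Complex.I) ^ (p : ℂ)).re) = (J N).re :=
      Complex.reCLM.intervalIntegral_comp_comm (hcP.intervalIntegrable _ _)
    rw [hre] at this
    have h5 := neg_le_of_abs_le (Complex.abs_re_le_norm (J N))
    nlinarith
  have s4 : (∫ x in (-(N : ℝ))..N, (FF S c (x + Complex.I)).re ^ p) ≤
      ∑ k ∈ Finset.range (2 * N), (3 * P (a k)) ^ p := by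
    rw [← hsplit _ hcR]
    exact Finset.sum_le_sum fun k _ => s2 (a k)
  calc ∑ m ∈ T, ‖FF S c (m + Complex.I)‖ ^ p
      ≤ ∑ m ∈ (Finset.range (2 * N)).map ⟨a, ainj⟩, ‖FF S c (m + Complex.I)‖ ^ p :=
        Finset.sum_le_sum_of_subset_of_nonneg hTsub fun _ _ _ => by positivity
    _ = ∑ k ∈ Finset.range (2 * N), ‖FF S c ((a k : ℤ) + Complex.I)‖ ^ p := by
        rw [Finset.sum_map]; rfl
    _ ≤ ∑ k ∈ Finset.range (2 * N), 2 ^ (p - 1) *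
        ((∫ x in (a k : ℝ)..(a k : ℝ) + 1, ‖FF S c (x + Complex.I)‖ ^ p) + (3 * P (a k)) ^ p) :=
        Finset.sum_le_sum fun k _ => s1 (a k)
    _ = 2 ^ (p - 1) * ((∫ x in (-(N : ℝ))..N, ‖FF S c (x + Complex.I)‖ ^ p)
        + ∑ k ∈ Finset.range (2 * N), (3 * P (a k)) ^ p) := by
        rw [← Finset.mul_sum, Finset.sum_add_distrib, hsplit _ hcN]
    _ ≤ _ := by
        apply mul_le_mul_of_nonneg_left _ (by positivity)
        nlinarith

theorem five_rpow (p : ℝ) (hp : 1 ≤ p) (a b c d e : ℝ) (ha : 0 ≤ a) (hb : 0 ≤ b) (hc : 0 ≤ c)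
    (hd : 0 ≤ d) (he : 0 ≤ e) :
    (a + b + c + d + e) ^ p ≤ 5 ^ (p - 1) * (a ^ p + b ^ p + c ^ p + d ^ p + e ^ p) := by
  have := Real.rpow_sum_le_const_mul_sum_rpow_of_nonneg (s := Finset.univ) (f := ![a, b, c, d, e]) hp
    (by intro i _; fin_cases i <;> simpa)
  simpa [Fin.sum_univ_five] using this

theorem kernel_err (K : ℤ → ℂ) (a : ℝ) (s : ℂ) (ha : |a| ≤ 1 / 2) (hs : ‖s‖ ≤ 1)
    (hK1 : ∀ k, ‖K k‖ ≤ 1) (hK : ∀ k : ℤ, K k * (a - k) = s) (k : ℤ) :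
    ‖K k - s * Complex.I * (Complex.I / (k + Complex.I))‖ ≤ 5 * pk k := by
  have nz : (k + Complex.I : ℂ) ≠ 0 := by
    intro h; have := congrArg Complex.im h; simp at this
  have e : K k - s * Complex.I * (Complex.I / (k + Complex.I)) =
      K k * (a + Complex.I) / (k + Complex.I) := by
    rw [← hK k]
    field_simp
    linear_combination (- K k * (a - k)) * Complex.I_sq
  have hv : ‖(k + Complex.I : ℂ)‖ ^ 2 = (k : ℝ) ^ 2 + 1 := by
    rw [← Complex.normSq_eq_norm_sq, Complex.normSq_apply]; simp; ring
  have p1 := norm_pos_iff.2 nz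
  rw [e, norm_div, norm_mul]
  unfold pk
  rw [← hv]
  have hk : ‖(k : ℂ)‖ ≤ ‖(a - k : ℂ)‖ + 1 / 2 := by
    have : (k : ℂ) = a - (a - k) := by ring
    rw [this]
    refine (norm_sub_le _ _).trans ?_
    rw [Complex.norm_real, Real.norm_eq_abs]
    simp only [sub_sub_cancel]
    linarith
  have hv2 : ‖(k + Complex.I : ℂ)‖ ≤ ‖(k : ℂ)‖ + 1 := by
    refine (norm_add_le _ _).trans ?_
    rw [Complex.norm_I]
  have hai : ‖(a + Complex.I : ℂ)‖ ≤ 2 := by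
    refine (norm_add_le _ _).trans ?_
    rw [Complex.norm_I, Complex.norm_real, Real.norm_eq_abs]
    linarith
  have hprod : ‖K k‖ * ‖(a - k : ℂ)‖ ≤ 1 := by rw [← norm_mul, hK]; exact hs
  have h1 := hK1 k
  have hb : ‖K k‖ * ‖(k + Complex.I : ℂ)‖ ≤ 5 / 2 := by
    nlinarith [norm_nonneg (K k), mul_le_mul_of_nonneg_left (hv2.trans (add_le_add_left hk 1)) (norm_nonneg (K k))]
  rw [mul_one_div, div_le_div_iff₀ p1 (by positivity), pow_two]
  have hb' : ‖K k‖ * ‖(k + Complex.I : ℂ)‖ * ‖(a + Complex.I : ℂ)‖ ≤ 5 / 2 * 2 :=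
    mul_le_mul hb hai (norm_nonneg _) (by norm_num)
  nlinarith

theorem kernelBound (p : ℝ) (hp1 : 1 < p) (hp2 : p < 2) : ∃ C : ℝ, 0 < C ∧
    ∀ (K : ℤ → ℂ) (a : ℝ) (s : ℂ), |a| ≤ 1 / 2 → ‖s‖ ≤ 1 → (∀ k, ‖K k‖ ≤ 1) →
      (∀ k : ℤ, K k * (a - k) = s) → ∀ (S T : Finset ℤ) (c : ℤ → ℂ),
      ∑ m ∈ T, ‖∑ n ∈ S, c n * K (m - n)‖ ^ p ≤ C * ∑ n ∈ S, ‖c n‖ ^ p := by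
  obtain ⟨C, hC, hline⟩ := lineBound p hp1 hp2
  obtain ⟨W, hW, hyoung⟩ := young p hp1
  refine ⟨5 ^ (p - 1) * (C + C + C + C + 5 ^ p * W), by positivity,
    fun K a s ha hs hK1 hK S T c => ?_⟩
  set c1 : ℤ → ℝ := fun n => max (c n).re 0 with hc1
  set c2 : ℤ → ℝ := fun n => max (-(c n).re) 0 with hc2
  set c3 : ℤ → ℝ := fun n => max (c n).im 0 with hc3
  set c4 : ℤ → ℝ := fun n => max (-(c n).im) 0 with hc4
  have hdec : ∀ n, c n = c1 n - c2 n + (c3 n - c4 n) * Complex.I := by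
    intro n
    have aux : ∀ x : ℝ, max x 0 - max (-x) 0 = x := fun x => by
      rcases le_total x 0 with h | h
      · rw [max_eq_right h, max_eq_left (by linarith)]; ring
      · rw [max_eq_left h, max_eq_right (by linarith)]; ring
    apply Complex.ext
    · simp [hc1, hc2, aux]
    · simp [hc3, hc4, aux]
  have hle : ∀ d : ℤ → ℝ, (∀ n, 0 ≤ d n) → (∀ n, d n ≤ ‖c n‖) →
      ∑ m ∈ T, ‖FF S d (m + Complex.I)‖ ^ p ≤ C * ∑ n ∈ S, ‖c n‖ ^ p := by
    intro d h0 h1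
    refine (hline S T d h0).trans (mul_le_mul_of_nonneg_left (Finset.sum_le_sum fun n _ => ?_) hC.le)
    exact Real.rpow_le_rpow (h0 n) (h1 n) (by linarith)
  have g1 := hle c1 (fun n => le_max_right _ _) (fun n => max_le
    ((le_abs_self _).trans (Complex.abs_re_le_norm _)) (norm_nonneg _))
  have g2 := hle c2 (fun n => le_max_right _ _) (fun n => max_le
    ((neg_le_abs _).trans (Complex.abs_re_le_norm _)) (norm_nonneg _))
  have g3 := hle c3 (fun n => le_max_right _ _) (fun n => max_le
    ((le_abs_self _).trans (Complex.abs_im_le_norm _)) (norm_nonneg _))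
  have g4 := hle c4 (fun n => le_max_right _ _) (fun n => max_le
    ((neg_le_abs _).trans (Complex.abs_im_le_norm _)) (norm_nonneg _))
  have g5 := hyoung S T (fun n => ‖c n‖) (fun n => norm_nonneg _)
  have hP0 : ∀ m, 0 ≤ ∑ n ∈ S, ‖c n‖ * pk (m - n) := fun m =>
    Finset.sum_nonneg fun n _ => mul_nonneg (norm_nonneg _) (pk_pos _).le
  have hpt : ∀ m : ℤ, ‖∑ n ∈ S, c n * K (m - n)‖ ≤ ‖FF S c1 (m + Complex.I)‖ + ‖FF S c2 (m + Complex.I)‖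
      + ‖FF S c3 (m + Complex.I)‖ + ‖FF S c4 (m + Complex.I)‖ + 5 * ∑ n ∈ S, ‖c n‖ * pk (m - n) := by
    intro m
    set X1 := FF S c1 (m + Complex.I) with hX1
    set X2 := FF S c2 (m + Complex.I) with hX2
    set X3 := FF S c3 (m + Complex.I) with hX3
    set X4 := FF S c4 (m + Complex.I) with hX4
    have e1 : ∑ n ∈ S, c n * (Complex.I / (((m - n : ℤ) : ℂ) + Complex.I)) =
        X1 - X2 + (X3 - X4) * Complex.I := by
      rw [hX1, hX2, hX3, hX4]
      unfold FF
      rw [← Finset.sum_sub_distrib, ← Finset.sum_sub_distrib, Finset.sum_mul, ← Finset.sum_add_distrib]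
      refine Finset.sum_congr rfl fun n _ => ?_
      have : ((m - n : ℤ) : ℂ) + Complex.I = m + Complex.I - n := by push_cast; ring
      rw [this]
      conv_lhs => rw [hdec n]
      ring
    have e2 : ∑ n ∈ S, c n * K (m - n) = s * Complex.I * (X1 - X2 + (X3 - X4) * Complex.I) +
        ∑ n ∈ S, c n * (K (m - n) - s * Complex.I * (Complex.I / (((m - n : ℤ) : ℂ) + Complex.I))) := by
      rw [← e1, Finset.mul_sum, ← Finset.sum_add_distrib]
      refine Finset.sum_congr rfl fun n _ => ?_
      ring
    rw [e2]
    refine (norm_add_le _ _).trans (add_le_add ?_ ?_)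
    · rw [norm_mul, norm_mul, Complex.norm_I, mul_one]
      have n1 := norm_add_le (X1 - X2) ((X3 - X4) * Complex.I)
      rw [norm_mul, Complex.norm_I, mul_one] at n1
      have n2 := norm_sub_le X1 X2
      have n3 := norm_sub_le X3 X4
      have n4 := mul_le_of_le_one_left (norm_nonneg (X1 - X2 + (X3 - X4) * Complex.I)) hs
      linarith
    · rw [Finset.mul_sum]
      refine (norm_sum_le _ _).trans (Finset.sum_le_sum fun n _ => ?_)
      rw [norm_mul, mul_left_comm]
      exact mul_le_mul_of_nonneg_left (kernel_err K a s ha hs hK1 hK (m - n)) (norm_nonneg _)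
  have hpt2 : ∀ m : ℤ, ‖∑ n ∈ S, c n * K (m - n)‖ ^ p ≤ 5 ^ (p - 1) *
      (‖FF S c1 (m + Complex.I)‖ ^ p + ‖FF S c2 (m + Complex.I)‖ ^ p
      + ‖FF S c3 (m + Complex.I)‖ ^ p + ‖FF S c4 (m + Complex.I)‖ ^ p
      + 5 ^ p * (∑ n ∈ S, ‖c n‖ * pk (m - n)) ^ p) := by
    intro m
    refine (Real.rpow_le_rpow (norm_nonneg _) (hpt m) (by linarith)).trans ?_
    rw [← Real.mul_rpow (by norm_num) (hP0 m)]
    exact five_rpow p hp1.le _ _ _ _ _ (norm_nonneg _) (norm_nonneg _) (norm_nonneg _)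
      (norm_nonneg _) (mul_nonneg (by norm_num) (hP0 m))
  refine (Finset.sum_le_sum fun m _ => hpt2 m).trans ?_
  rw [← Finset.mul_sum, Finset.sum_add_distrib, Finset.sum_add_distrib, Finset.sum_add_distrib,
    Finset.sum_add_distrib, ← Finset.mul_sum, mul_assoc]
  apply mul_le_mul_of_nonneg_left _ (by positivity)
  have h5 : (0:ℝ) < 5 ^ p := by positivity
  have := mul_le_mul_of_nonneg_left g5 h5.le
  linarith

theorem fourier_uniq {T : ℝ} [hT : Fact (0 < T)] (F : AddCircle T → ℂ)
    (hF : Integrable F AddCircle.haarAddCircle) (h0 : ∀ n, fourierCoeff F n = 0) :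
    F =ᵐ[AddCircle.haarAddCircle] 0 := by
  have hint : ∀ φ : C(AddCircle T, ℂ), Integrable (fun t => φ t * F t) AddCircle.haarAddCircle := by
    intro φ
    exact hF.bdd_mul (c := ‖φ‖) (map_continuous φ).aestronglyMeasurable
      (ae_of_all _ fun t => φ.norm_coe_le_norm t)
  let L0 : C(AddCircle T, ℂ) →ₗ[ℂ] ℂ :=
    { toFun := fun φ => ∫ t, φ t * F t ∂AddCircle.haarAddCircle
      map_add' := by
        intro φ ψ
        rw [← integral_add (hint φ) (hint ψ)]
        simp [add_mul]
      map_smul' := by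
        intro c φ
        simp only [ContinuousMap.coe_smul, Pi.smul_apply, smul_eq_mul, RingHom.id_apply, mul_assoc]
        rw [integral_const_mul] }
  let L : C(AddCircle T, ℂ) →L[ℂ] ℂ := L0.mkContinuous (∫ t, ‖F t‖ ∂AddCircle.haarAddCircle) (by
    intro φ
    change ‖∫ t, φ t * F t ∂AddCircle.haarAddCircle‖ ≤ _
    refine (norm_integral_le_integral_norm _).trans ?_
    rw [mul_comm, ← integral_const_mul]
    refine integral_mono (hint φ).norm (hF.norm.const_mul _) fun t => ?_
    simp only [norm_mul]
    exact mul_le_mul_of_nonneg_right (φ.norm_coe_le_norm t) (norm_nonneg _))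
  have hker : (Submodule.span ℂ (Set.range (@fourier T))).topologicalClosure ≤ L.ker := by
    apply Submodule.topologicalClosure_minimal _ _ L.isClosed_ker
    rw [Submodule.span_le]
    rintro _ ⟨n, rfl⟩
    have := h0 (-n)
    simp only [fourierCoeff, neg_neg, smul_eq_mul] at this
    exact this
  rw [span_fourier_closure_eq_top] at hker
  have hall : ∀ φ : C(AddCircle T, ℂ), ∫ t, φ t * F t ∂AddCircle.haarAddCircle = 0 :=
    fun φ => hker (Submodule.mem_top (x := φ))
  apply ae_eq_zero_of_forall_setIntegral_isClosed_eq_zero hF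
  intro s hs
  have hδ : ∀ n : ℕ, (0 : ℝ) < 1 / ((n : ℝ) + 1) := fun n => by positivity
  have hlim := thickenedIndicator_tendsto_indicator_closure hδ
    tendsto_one_div_add_atTop_nhds_zero_nat s
  rw [hs.closure_eq, tendsto_pi_nhds] at hlim
  have hmeas := hs.measurableSet
  have hconv : Filter.Tendsto (fun n : ℕ => ∫ t, (((thickenedIndicator (hδ n) s t : NNReal) : ℝ) : ℂ) * F t
      ∂AddCircle.haarAddCircle) Filter.atTop (nhds (∫ t, s.indicator F t ∂AddCircle.haarAddCircle)) := by
    apply tendsto_integral_of_dominated_convergence (fun t => ‖F t‖)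
    · intro n
      have : Continuous (fun t => (((thickenedIndicator (hδ n) s t : NNReal) : ℝ) : ℂ)) :=
        Complex.continuous_ofReal.comp (NNReal.continuous_coe.comp
          (thickenedIndicator (hδ n) s).continuous)
      exact this.aestronglyMeasurable.mul hF.aestronglyMeasurable
    · exact hF.norm
    · intro n
      refine ae_of_all _ fun t => ?_
      rw [norm_mul, Complex.norm_real, Real.norm_of_nonneg (NNReal.coe_nonneg _)]
      apply mul_le_of_le_one_left (norm_nonneg _)
      exact_mod_cast thickenedIndicator_le_one (hδ n) s t
    · refine ae_of_all _ fun t => ?_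
      have h1 := ((Complex.continuous_ofReal.comp NNReal.continuous_coe).tendsto _).comp (hlim t)
      have h2 := h1.mul_const (F t)
      have h3 : s.indicator F t
          = (Complex.ofReal ∘ NNReal.toReal) (s.indicator (fun _ => (1 : NNReal)) t) * F t := by
        by_cases ht : t ∈ s <;> simp [ht]
      rw [h3]
      exact h2
  rw [← integral_indicator hmeas]
  refine tendsto_nhds_unique hconv ?_
  have : ∀ n : ℕ, ∫ t, (((thickenedIndicator (hδ n) s t : NNReal) : ℝ) : ℂ) * F t
      ∂AddCircle.haarAddCircle = 0 := fun n =>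
    hall ⟨fun t => (((thickenedIndicator (hδ n) s t : NNReal) : ℝ) : ℂ),
      Complex.continuous_ofReal.comp (NNReal.continuous_coe.comp
          (thickenedIndicator (hδ n) s).continuous)⟩
  simp only [this]
  exact tendsto_const_nhds

theorem fourier_conv {T : ℝ} [hT : Fact (0 < T)] (F E : AddCircle T → ℂ)
    (hF : Integrable F AddCircle.haarAddCircle)
    (hmem : Memℓp (fourierCoeff F) 2)
    (hE : AEStronglyMeasurable E AddCircle.haarAddCircle) (hE1 : ∀ t, ‖E t‖ ≤ 1) (n : ℤ) :
    HasSum (fun k => fourierCoeff F k * fourierCoeff E (n - k))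
      (fourierCoeff (fun t => E t * F t) n) := by
  let h : Lp ℂ 2 (@AddCircle.haarAddCircle T hT) := fourierBasis.repr.symm ⟨fourierCoeff F, hmem⟩
  have hcoef : ∀ k, fourierCoeff h k = fourierCoeff F k := by
    intro k
    rw [← fourierBasis_repr]
    simp [h]
  have hhint : Integrable h AddCircle.haarAddCircle := (Lp.memLp h).integrable (by norm_num)
  have hae : F =ᵐ[AddCircle.haarAddCircle] h := by
    have := fourier_uniq (F - ⇑h) (hF.sub hhint) (by
      intro n
      have : fourierCoeff (F - ⇑h) n = fourierCoeff F n - fourierCoeff h n := by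
        simp only [fourierCoeff, Pi.sub_apply, smul_sub]
        exact integral_sub (hF.fourier_smul _) (hhint.fourier_smul _)
      rw [this, hcoef, sub_self])
    filter_upwards [this] with t ht
    exact sub_eq_zero.1 ht
  have hgmem : MemLp (fun t => (starRingEnd ℂ) (fourier (-n) t * E t)) 2 (@AddCircle.haarAddCircle T hT) := by
    apply MemLp.of_bound (C := 1)
    · exact Complex.continuous_conj.comp_aestronglyMeasurable
        ((map_continuous (fourier (-n))).aestronglyMeasurable.mul hE)
    · refine ae_of_all _ fun t => ?_
      rw [RCLike.norm_conj, norm_mul, fourier_apply, Circle.norm_coe, one_mul]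
      exact hE1 t
  have hin : ∀ u : Lp ℂ 2 (@AddCircle.haarAddCircle T hT),
      innerSL ℂ hgmem.toLp u = ∫ t, fourier (-n) t * E t * u t ∂AddCircle.haarAddCircle := by
    intro u
    rw [innerSL_apply_apply, MeasureTheory.L2.inner_def]
    apply integral_congr_ae
    filter_upwards [hgmem.coeFn_toLp] with t ht
    rw [ht, RCLike.inner_apply', Complex.conj_conj]
  have H := (hasSum_fourier_series_L2 h).mapL (innerSL ℂ hgmem.toLp)
  have e1 : innerSL ℂ hgmem.toLp h = fourierCoeff (fun t => E t * F t) n := by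
    rw [hin]
    apply integral_congr_ae
    filter_upwards [hae] with t ht
    rw [ht, smul_eq_mul, mul_assoc]
  rw [e1] at H
  have hfun : (fun k => fourierCoeff F k * fourierCoeff E (n - k)) =
      fun k => innerSL ℂ hgmem.toLp (fourierCoeff h k • fourierLp 2 k) := by
    funext k
    rw [map_smul, hcoef, smul_eq_mul, hin]
    congr 1
    apply integral_congr_ae
    filter_upwards [coeFn_fourierLp (T := T) 2 k] with t ht
    rw [ht, smul_eq_mul, (by ring : -(n - k) = -n + k), fourier_add]
    ring
  rw [hfun]
  exact H

instance fact_two_pi : Fact (0 < 2 * Real.pi) := ⟨by positivity⟩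

theorem fourierCoef_eq (f : ℝ → ℂ) (k : ℤ) :
    fourierCoef f k = fourierCoeff (AddCircle.liftIoc (2 * Real.pi) 0 f) k := by
  rw [fourierCoeff_eq_intervalIntegral _ _ 0, zero_add]
  unfold fourierCoef
  rw [Complex.real_smul]
  congr 1
  · push_cast; rfl
  · rw [intervalIntegral.integral_of_le (by positivity), intervalIntegral.integral_of_le (by positivity)]
    refine setIntegral_congr_fun measurableSet_Ioc fun x hx => ?_
    rw [AddCircle.liftIoc_coe_apply (by simpa using hx), fourier_coe_apply, smul_eq_mul, mul_comm]
    congr 2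
    have : (Real.pi : ℂ) ≠ 0 := by exact_mod_cast Real.pi_ne_zero
    push_cast
    field_simp

theorem ker_norm (a b : ℝ) (k : ℤ) :
    ‖fourierCoef (fun t => Complex.exp (Complex.I * ((a * t + b : ℝ) : ℂ))) k‖ ≤ 1 := by
  unfold fourierCoef
  have hpi := Real.pi_pos
  have h := intervalIntegral.norm_integral_le_of_norm_le_const (a := 0) (b := 2 * Real.pi)
    (f := fun t : ℝ => Complex.exp (Complex.I * ((a * t + b : ℝ) : ℂ)) *
      Complex.exp (-Complex.I * (k : ℂ) * (t : ℂ))) (C := 1) (by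
      intro t _
      rw [norm_mul, mul_comm Complex.I, Complex.norm_exp_ofReal_mul_I,
        (by push_cast; ring : -Complex.I * (k : ℂ) * (t : ℂ) = ((-k * t : ℝ) : ℂ) * Complex.I),
        Complex.norm_exp_ofReal_mul_I, one_mul])
  rw [norm_mul, norm_div, norm_mul, Complex.norm_real, Real.norm_of_nonneg hpi.le]
  rw [sub_zero, abs_of_pos (by positivity), one_mul] at h
  simp only [norm_one, Complex.norm_ofNat]
  rw [one_div, inv_mul_le_iff₀ (by positivity), mul_one]
  exact h

theorem ker_eq (a b : ℝ) (k : ℤ) :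
    fourierCoef (fun t => Complex.exp (Complex.I * ((a * t + b : ℝ) : ℂ))) k * (a - k) =
      Complex.exp (b * Complex.I) * (Complex.exp ((2 * Real.pi * a : ℝ) * Complex.I) - 1)
        / (2 * Real.pi * Complex.I) := by
  have hpi : (Real.pi : ℂ) ≠ 0 := by exact_mod_cast Real.pi_ne_zero
  unfold fourierCoef
  have e : ∀ t : ℝ, Complex.exp (Complex.I * ((a * t + b : ℝ) : ℂ)) *
      Complex.exp (-Complex.I * (k : ℂ) * (t : ℂ)) =
      Complex.exp (b * Complex.I) * Complex.exp ((Complex.I * (a - k)) * t) := by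
    intro t
    rw [← Complex.exp_add, ← Complex.exp_add]
    congr 1
    push_cast
    ring
  simp_rw [e]
  rw [intervalIntegral.integral_const_mul]
  have hk : Complex.exp ((2 * Real.pi * a : ℝ) * Complex.I) =
      Complex.exp (Complex.I * (a - k) * (2 * Real.pi : ℝ)) := by
    rw [← mul_one (Complex.exp (Complex.I * (a - k) * (2 * Real.pi : ℝ))),
      ← Complex.exp_int_mul_two_pi_mul_I k, ← Complex.exp_add]
    congr 1
    push_cast
    ring
  by_cases hc : (a - k : ℂ) = 0
  · rw [hk, hc]; simp
  · rw [integral_exp_mul_complex (mul_ne_zero Complex.I_ne_zero hc), hk]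
    simp only [Complex.ofReal_zero, mul_zero, Complex.exp_zero]
    field_simp

theorem s_norm (a b : ℝ) : ‖Complex.exp (b * Complex.I) *
    (Complex.exp ((2 * Real.pi * a : ℝ) * Complex.I) - 1) / (2 * Real.pi * Complex.I)‖ ≤ 1 := by
  have hpi := Real.pi_gt_three
  rw [norm_div, norm_mul, norm_mul, norm_mul, Complex.norm_exp_ofReal_mul_I, Complex.norm_I,
    Complex.norm_real, Real.norm_of_nonneg Real.pi_pos.le]
  have := norm_sub_le (Complex.exp ((2 * Real.pi * a : ℝ) * Complex.I)) 1
  rw [Complex.norm_exp_ofReal_mul_I, norm_one] at this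
  simp only [Complex.norm_ofNat, one_mul, mul_one]
  rw [div_le_one (by positivity)]
  linarith

/-- Lemma 9: multiplication by e^{il}, where l is 2π-periodic and linear
on (0,2π), is bounded on A_p(𝕋) with constant independent of l. -/
theorem statement14
    (p : ℝ) (hp1 : 1 < p) (hp2 : p < 2) :
    ∃ c : ℝ, 0 < c ∧
      ∀ (l : ℝ → ℝ) (a b : ℝ) (f : ℝ → ℂ),
        Function.Periodic l (2 * Real.pi) →
        (∀ t ∈ Ioo 0 (2 * Real.pi), l t = a * t + b) →
        IntervalIntegrable f volume 0 (2 * Real.pi) →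
        ApNorm p (fun t => Complex.exp (Complex.I * (l t : ℂ)) * f t)
          ≤ ENNReal.ofReal c * ApNorm p f := by
  obtain ⟨C, hC, hker⟩ := kernelBound p hp1 hp2
  have hp0 : 0 < p := by linarith
  refine ⟨C ^ (1 / p), by positivity, fun l a b f _ hl hf => ?_⟩
  set e : ℝ → ℂ := fun t => Complex.exp (Complex.I * ((a * t + b : ℝ) : ℂ)) with he
  set F := AddCircle.liftIoc (2 * Real.pi) 0 f with hFdef
  set E := AddCircle.liftIoc (2 * Real.pi) 0 e with hEdef
  set g : ℝ → ℂ := fun t => Complex.exp (Complex.I * (l t : ℂ)) * f t with hg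
  have hgc : ∀ n, fourierCoef g n = fourierCoeff (fun t => E t * F t) n := by
    intro n
    have h1 : fourierCoef g n = fourierCoef (fun t => e t * f t) n := by
      unfold fourierCoef
      congr 1
      apply intervalIntegral.integral_congr_Ioo_of_le (by positivity)
      intro t ht
      simp only [hg, he]
      rw [hl t ht]
    rw [h1, fourierCoef_eq]
    rfl
  rw [← ENNReal.ofReal_rpow_of_pos hC]
  unfold ApNorm
  rw [← ENNReal.mul_rpow_of_nonneg _ _ (by positivity)]
  apply ENNReal.rpow_le_rpow _ (by positivity)
  by_cases htop : ∑' k : ℤ, ((‖fourierCoef f k‖₊ : ℝ≥0∞) ^ p) = ⊤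
  · rw [htop, ENNReal.mul_top (by simpa using hC)]
    exact le_top
  have hterm : ∀ x : ℂ, ((‖x‖₊ : ℝ≥0∞) ^ p) = ENNReal.ofReal (‖x‖ ^ p) := by
    intro x
    rw [← ENNReal.ofReal_rpow_of_nonneg (norm_nonneg _) hp0.le, ofReal_norm]
    rfl
  simp_rw [hterm] at htop ⊢
  have hsum : Summable (fun k : ℤ => ‖fourierCoef f k‖ ^ p) := by
    have := ENNReal.summable_toReal htop
    refine this.congr fun k => ?_
    rw [ENNReal.toReal_ofReal (by positivity)]
  rw [← ENNReal.ofReal_tsum_of_nonneg (fun k => by positivity) hsum, ← ENNReal.ofReal_mul hC.le]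
  have hmem : Memℓp (fourierCoeff F) 2 := by
    have h1 : Memℓp (fourierCoeff F) (ENNReal.ofReal p) := by
      apply memℓp_gen
      rw [ENNReal.toReal_ofReal hp0.le]
      refine hsum.congr fun k => ?_
      rw [fourierCoef_eq]
    apply h1.of_exponent_ge
    rw [← ENNReal.ofReal_ofNat]
    exact ENNReal.ofReal_le_ofReal hp2.le
  have hFint : Integrable F AddCircle.haarAddCircle := by
    rw [← memLp_one_iff_integrable, memLp_haarAddCircle_iff]
    apply MemLp.memLp_liftIoc
    rw [memLp_one_iff_integrable, zero_add]
    exact (intervalIntegrable_iff_integrableOn_Ioc_of_le (by positivity)).1 hf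
  have he1 : ∀ t, ‖e t‖ = 1 := fun t => by
    simp only [he]; rw [mul_comm, Complex.norm_exp_ofReal_mul_I]
  have hEmem : MemLp E 1 AddCircle.haarAddCircle := by
    rw [memLp_haarAddCircle_iff]
    apply MemLp.memLp_liftIoc
    apply MemLp.of_bound (C := 1)
    · have : Continuous e := by simp only [he]; fun_prop
      exact this.aestronglyMeasurable
    · exact ae_of_all _ fun t => (he1 t).le
  have hconv := fourier_conv F E hFint hmem hEmem.1 (fun t => (he1 _).le)
  rw [ENNReal.tsum_eq_iSup_sum]
  refine iSup_le fun T => ?_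
  rw [← ENNReal.ofReal_sum_of_nonneg (fun k _ => by positivity)]
  apply ENNReal.ofReal_le_ofReal
  have hlim : Filter.Tendsto (fun S : Finset ℤ => ∑ n ∈ T,
      ‖∑ k ∈ S, fourierCoeff F k * fourierCoeff E (n - k)‖ ^ p) Filter.atTop
      (nhds (∑ n ∈ T, ‖fourierCoef g n‖ ^ p)) := by
    apply tendsto_finsetSum
    intro n _
    rw [hgc n]
    exact (Filter.Tendsto.norm (hconv n)).rpow_const (Or.inr hp0.le)
  refine le_of_tendsto hlim (Filter.Eventually.of_forall fun S => ?_)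
  let j : ℤ := round a
  have hinj : Function.Injective (fun n : ℤ => n - j) := fun x y h => by simpa using h
  have key := hker (fun k => fourierCoef e (k + j)) (a - round a)
    (Complex.exp (b * Complex.I) * (Complex.exp ((2 * Real.pi * a : ℝ) * Complex.I) - 1)
        / (2 * Real.pi * Complex.I)) (abs_sub_round a) (s_norm a b) (fun k => ker_norm a b _)
    (fun k => by
      rw [← ker_eq a b (k + j)]
      congr 1
      simp only [j]
      push_cast
      ring) S (T.map ⟨_, hinj⟩) (fun k => fourierCoeff F k)
  rw [Finset.sum_map] at key
  refine le_trans (le_of_eq ?_) (key.trans (mul_le_mul_of_nonneg_left ?_ hC.le))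
  · refine Finset.sum_congr rfl fun n _ => ?_
    congr 2
    refine Finset.sum_congr rfl fun k _ => ?_
    simp only [Function.Embedding.coeFn_mk]
    rw [fourierCoef_eq, (by ring : n - j - k + j = n - k)]
  · simp_rw [hFdef, ← fourierCoef_eq]
    exact hsum.sum_le_tsum S (fun k _ => by positivity)
end

section
/- Let 1 ≤ p < 2. Let φ: ℝ → ℝ be a C^{1,ω}-smooth map of the circle into itself, i.e., φ is continuously differentiable with φ′ ∈ Lip_ω(ℝ) and φ(t + 2π) = φ(t) (mod 2π). Suppose φ is nonlinear (not of the form φ(t) = mt + t₀). Then there exists c_p > 0 such that ‖e^{inφ}‖_{A_p(𝕋)} ≥ c_p · |n|^{1/p} · χ^{-1}(1/|n|) for all nonzero integers n, where χ^{-1} is the inverse function of χ(δ) = δ·ω(δ). -/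
open MeasureTheory Real Set
open scoped ENNReal

noncomputable def qk (s : ℝ) : ℝ := Real.cos (s/2) ^ 2

noncomputable def Tavg (g : ℤ → ℝ≥0∞) (k : ℤ) : ℝ≥0∞ :=
  (1/2) * g k + ((1/4) * g (k-1) + (1/4) * g (k+1))

lemma half_add_quarter : (1/2 : ℝ≥0∞) + (1/4 + 1/4) = 1 := by
  have h : (1/4 : ℝ≥0∞) + 1/4 = 1/2 := by
    rw [ENNReal.div_add_div_same, ← ENNReal.toReal_eq_toReal_iff' (by finiteness) (by finiteness)]
    norm_num
  rw [h, ENNReal.add_halves]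

lemma Tavg_pow (p : ℝ) (hp : 1 ≤ p) (g : ℤ → ℝ≥0∞) (k : ℤ) :
    (Tavg g k) ^ p ≤ Tavg (fun k => g k ^ p) k := by
  have h := ENNReal.rpow_arith_mean_le_arith_mean_rpow (Finset.univ : Finset (Fin 3))
    ![1/2, 1/4, 1/4] ![g k, g (k-1), g (k+1)] (by
      simp only [Fin.sum_univ_three, Matrix.cons_val]
      rw [add_assoc, half_add_quarter]) hp
  simp only [Fin.sum_univ_three, Matrix.cons_val] at h
  simpa [Tavg, add_assoc] using h

lemma tsum_Tavg (g : ℤ → ℝ≥0∞) : ∑' k, Tavg g k = ∑' k, g k := by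
  unfold Tavg
  rw [ENNReal.tsum_add, ENNReal.tsum_add, ENNReal.tsum_mul_left, ENNReal.tsum_mul_left,
    ENNReal.tsum_mul_left]
  have h1 : ∑' k : ℤ, g (k-1) = ∑' k, g k := (Equiv.subRight (1:ℤ)).tsum_eq g
  have h2 : ∑' k : ℤ, g (k+1) = ∑' k, g k := (Equiv.addRight (1:ℤ)).tsum_eq g
  rw [h1, h2, ← add_mul, ← add_mul, half_add_quarter, one_mul]

lemma tsum_Tavg_pow (p : ℝ) (hp : 1 ≤ p) (g : ℤ → ℝ≥0∞) (m : ℕ) :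
    ∑' k, (Tavg^[m] g k) ^ p ≤ ∑' k, g k ^ p := by
  induction m with
  | zero => simp
  | succ m ih =>
    refine le_trans ?_ ih
    rw [Function.iterate_succ_apply']
    calc _ ≤ ∑' k, Tavg (fun k => (Tavg^[m] g k) ^ p) k :=
          ENNReal.tsum_le_tsum fun k => Tavg_pow p hp _ k
      _ = _ := tsum_Tavg _

lemma continuous_qk : Continuous qk := by unfold qk; fun_prop

lemma qk_eq (s : ℝ) : ((qk s : ℝ) : ℂ) =
    1/2 + (1/4) * Complex.exp (Complex.I * s) + (1/4) * Complex.exp (-Complex.I * s) := by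
  have h : qk s = 1/2 + Real.cos s / 2 := by
    unfold qk; rw [Real.cos_sq]; ring_nf
  rw [h]
  push_cast
  rw [Complex.cos]
  ring_nf

lemma fourierCoef_step (f : ℝ → ℂ) (hf : Continuous f) (t0 : ℝ) (k : ℤ) :
    fourierCoef (fun t => f t * (qk (t - t0) : ℂ)) k =
      (1/2) * fourierCoef f k +
      ((1/4) * Complex.exp (-Complex.I * t0) * fourierCoef f (k-1) +
      (1/4) * Complex.exp (Complex.I * t0) * fourierCoef f (k+1)) := by
  have hi : ∀ k : ℤ, IntervalIntegrable (fun t : ℝ => f t * Complex.exp (-Complex.I * (k : ℂ) * (t : ℂ)))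
      volume 0 (2 * Real.pi) := fun k => by
    apply Continuous.intervalIntegrable; fun_prop
  have key : ∀ t : ℝ, f t * (qk (t - t0) : ℂ) * Complex.exp (-Complex.I * (k : ℂ) * (t : ℂ)) =
     (1/2) * (f t * Complex.exp (-Complex.I * (k : ℂ) * (t : ℂ))) +
     ((1/4) * Complex.exp (-Complex.I * t0) * (f t * Complex.exp (-Complex.I * ((k-1 : ℤ) : ℂ) * (t : ℂ)))
     + (1/4) * Complex.exp (Complex.I * t0) * (f t * Complex.exp (-Complex.I * ((k+1 : ℤ) : ℂ) * (t : ℂ)))) := by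
    intro t
    have e1 : Complex.exp (-Complex.I * ((k-1 : ℤ) : ℂ) * (t : ℂ)) =
      Complex.exp (-Complex.I * (k : ℂ) * (t : ℂ)) * Complex.exp (Complex.I * t) := by
      rw [← Complex.exp_add]; push_cast; ring_nf
    have e2 : Complex.exp (-Complex.I * ((k+1 : ℤ) : ℂ) * (t : ℂ)) =
      Complex.exp (-Complex.I * (k : ℂ) * (t : ℂ)) * Complex.exp (-Complex.I * t) := by
      rw [← Complex.exp_add]; push_cast; ring_nf
    have e3 : Complex.exp (Complex.I * ((t - t0 : ℝ) : ℂ)) =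
      Complex.exp (Complex.I * t) * Complex.exp (-Complex.I * t0) := by
      rw [← Complex.exp_add]; push_cast; ring_nf
    have e4 : Complex.exp (-Complex.I * ((t - t0 : ℝ) : ℂ)) =
      Complex.exp (-Complex.I * t) * Complex.exp (Complex.I * t0) := by
      rw [← Complex.exp_add]; push_cast; ring_nf
    rw [qk_eq, e1, e2, e3, e4]; ring
  unfold fourierCoef
  simp only [key]
  rw [intervalIntegral.integral_add ((hi _).const_mul _)
      (((hi _).const_mul _).add ((hi _).const_mul _)),
    intervalIntegral.integral_add ((hi _).const_mul _) ((hi _).const_mul _),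
    intervalIntegral.integral_const_mul, intervalIntegral.integral_const_mul,
    intervalIntegral.integral_const_mul]
  ring

lemma fourierCoef_le_Tavg (f : ℝ → ℂ) (hf : Continuous f) (t0 : ℝ) (k : ℤ) :
    (‖fourierCoef (fun t => f t * (qk (t - t0) : ℂ)) k‖₊ : ℝ≥0∞) ≤
      Tavg (fun k => (‖fourierCoef f k‖₊ : ℝ≥0∞)) k := by
  have hn1 : ‖Complex.exp (-Complex.I * t0)‖ = 1 := by
    rw [Complex.norm_exp]; simp
  have hn2 : ‖Complex.exp (Complex.I * t0)‖ = 1 := by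
    rw [Complex.norm_exp]; simp
  have h : ‖fourierCoef (fun t => f t * (qk (t - t0) : ℂ)) k‖ ≤
      (1/2) * ‖fourierCoef f k‖ + ((1/4) * ‖fourierCoef f (k-1)‖ + (1/4) * ‖fourierCoef f (k+1)‖) := by
    rw [fourierCoef_step f hf]
    refine (norm_add_le _ _).trans ?_
    gcongr
    · simp
    refine (norm_add_le _ _).trans ?_
    rw [norm_mul, norm_mul, norm_mul, norm_mul, hn1, hn2]
    simp
  unfold Tavg
  have h' := ENNReal.ofReal_le_ofReal h
  rw [ENNReal.ofReal_add (by positivity) (by positivity), ENNReal.ofReal_add (by positivity) (by positivity),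
    ENNReal.ofReal_mul (by positivity), ENNReal.ofReal_mul (by positivity), ENNReal.ofReal_mul (by positivity),
    ENNReal.ofReal_div_of_pos (by positivity), ENNReal.ofReal_div_of_pos (by positivity)] at h'
  simpa [ofReal_norm, enorm_eq_nnnorm] using h'

lemma Tavg_mono {g h : ℤ → ℝ≥0∞} (H : ∀ k, g k ≤ h k) (k : ℤ) : Tavg g k ≤ Tavg h k := by
  unfold Tavg
  gcongr <;> apply H

lemma fourierCoef_le_iter (f : ℝ → ℂ) (hf : Continuous f) (t0 : ℝ) (m : ℕ) (k : ℤ) :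
    (‖fourierCoef (fun t => f t * ((qk (t - t0) ^ m : ℝ) : ℂ)) k‖₊ : ℝ≥0∞) ≤
      Tavg^[m] (fun k => (‖fourierCoef f k‖₊ : ℝ≥0∞)) k := by
  induction m generalizing k with
  | zero => simp
  | succ m ih =>
    rw [Function.iterate_succ_apply']
    refine le_trans ?_ (Tavg_mono ih k)
    have := fourierCoef_le_Tavg (fun t => f t * ((qk (t - t0) ^ m : ℝ) : ℂ))
      (by have := continuous_qk; fun_prop) t0 k
    simpa [pow_succ, mul_assoc] using this

/-- Main summation lemma. -/
lemma ApNorm_lower (p : ℝ) (hp : 1 ≤ p) (f : ℝ → ℂ) (hf : Continuous f) (m : ℕ) (S : Finset ℤ)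
    (b : ℝ) (hb : 0 ≤ b)
    (H : ∀ k ∈ S, ∃ t0 : ℝ, b ≤ ‖fourierCoef (fun t => f t * ((qk (t - t0) ^ m : ℝ) : ℂ)) k‖) :
    ENNReal.ofReal ((S.card : ℝ) ^ (1/p) * b) ≤ ApNorm p f := by
  have hp0 : 0 < p := by linarith
  have h1 : (S.card : ℝ≥0∞) * ENNReal.ofReal b ^ p ≤ ∑' k : ℤ, ((‖fourierCoef f k‖₊ : ℝ≥0∞) ^ p) := by
    refine le_trans ?_ (tsum_Tavg_pow p hp (fun k => (‖fourierCoef f k‖₊ : ℝ≥0∞)) m)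
    refine le_trans ?_ (ENNReal.sum_le_tsum S)
    rw [← nsmul_eq_mul]
    apply Finset.card_nsmul_le_sum
    intro k hk
    obtain ⟨t0, ht⟩ := H k hk
    apply ENNReal.rpow_le_rpow _ hp0.le
    refine le_trans ?_ (fourierCoef_le_iter f hf t0 m k)
    have := ENNReal.ofReal_le_ofReal ht
    simpa only [ofReal_norm, enorm_eq_nnnorm] using this
  have h2 := ENNReal.rpow_le_rpow h1 (z := 1/p) (by positivity)
  unfold ApNorm
  refine le_trans (le_of_eq ?_) h2
  rw [ENNReal.mul_rpow_of_nonneg _ _ (by positivity), ← ENNReal.rpow_mul, mul_one_div_cancel hp0.ne',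
    ENNReal.rpow_one, ENNReal.ofReal_mul (by positivity),
    ← ENNReal.ofReal_rpow_of_nonneg (by positivity) (by positivity), ENNReal.ofReal_natCast]

noncomputable def Wk (m : ℕ) : ℝ := ∫ s in (-Real.pi)..Real.pi, qk s ^ m

lemma Wk_zero : Wk 0 = 2 * Real.pi := by
  simp [Wk]; ring

lemma Wk_eq (m : ℕ) : Wk m = 2 * ∫ s in (-Real.pi/2)..(Real.pi/2), Real.cos s ^ (2*m) := by
  unfold Wk qk
  have := intervalIntegral.integral_comp_div (a := -Real.pi) (b := Real.pi) (c := 2)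
    (fun s => Real.cos s ^ (2*m)) (by norm_num)
  simpa [pow_mul] using this

lemma Wk_succ (m : ℕ) : Wk (m+1) = (2*m+1)/(2*m+2) * Wk m := by
  rw [Wk_eq, Wk_eq]
  have := integral_cos_pow (a := -Real.pi/2) (b := Real.pi/2) (2*m)
  have h1 : Real.cos (-Real.pi/2) = 0 := by rw [neg_div, Real.cos_neg, Real.cos_pi_div_two]
  rw [show 2*(m+1) = 2*m+2 by ring, this, h1, Real.cos_pi_div_two]
  push_cast
  simp
  ring

lemma Wk_pos (m : ℕ) : 0 < Wk m := by
  induction m with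
  | zero => rw [Wk_zero]; positivity
  | succ m ih => rw [Wk_succ]; positivity

lemma Wk_lower (m : ℕ) : Real.pi ^ 2 ≤ Wk (m+1) ^ 2 * (m+1) := by
  induction m with
  | zero => rw [Wk_succ, Wk_zero]; apply le_of_eq; push_cast; ring
  | succ m ih =>
    refine ih.trans ?_
    rw [Wk_succ (m+1), mul_pow, mul_comm (_ ^ 2) (Wk (m+1) ^ 2), mul_assoc]
    gcongr
    push_cast
    rw [div_pow, div_mul_eq_mul_div, le_div_iff₀ (by positivity)]
    nlinarith [(Nat.cast_nonneg m : (0:ℝ) ≤ m)]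

lemma sq_le_sin (s : ℝ) (h : s ∈ Icc (-Real.pi) Real.pi) : s^2 ≤ Real.pi^2 * (1 - qk s) := by
  have h1 : 1 - qk s = Real.sin (|s|/2) ^ 2 := by
    unfold qk
    have : Real.cos (|s|/2) = Real.cos (s/2) := by
      rw [← Real.cos_abs (s/2), abs_div]; simp
    rw [Real.sin_sq, this]
  have h2 : |s| ≤ Real.pi := abs_le.mpr h
  have h3 := Real.mul_le_sin (x := |s|/2) (by positivity) (by linarith)
  have hpi := Real.pi_pos
  have h4 : |s| ≤ Real.pi * Real.sin (|s|/2) := by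
    calc |s| = Real.pi * (2 / Real.pi * (|s|/2)) := by field_simp
      _ ≤ _ := by gcongr
  rw [h1, ← mul_pow, ← sq_abs s]
  gcongr

lemma qk_nonneg (s : ℝ) : 0 ≤ qk s := by unfold qk; positivity

lemma qk_periodic : Function.Periodic qk (2 * Real.pi) := by
  intro s
  unfold qk
  rw [show (s + 2 * Real.pi)/2 = s/2 + Real.pi by ring, Real.cos_add_pi]; ring

lemma half_le_cos (x : ℝ) (h : |x| ≤ 1) : 1/2 ≤ Real.cos x := by
  have := Real.one_sub_sq_div_two_le_cos (x := x)
  have : x^2 ≤ 1 := by rw [← sq_abs]; nlinarith [abs_nonneg x]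
  linarith

lemma exists_m (δ : ℝ) (hδ : 0 < δ) (hδπ : δ ≤ Real.pi) :
    ∃ m : ℕ, 6 * Real.pi^2 / δ^2 ≤ 2*m+2 ∧ δ/2 ≤ Wk m := by
  have hpi := Real.pi_pos
  have h1 : 1 ≤ Real.pi^2/δ^2 := by
    rw [one_le_div (by positivity)]; gcongr
  obtain ⟨m, hm⟩ : ∃ m : ℕ, ⌈3 * Real.pi^2/δ^2⌉₊ = m + 1 :=
    Nat.exists_eq_succ_of_ne_zero (Nat.ceil_pos.mpr (by positivity)).ne'
  have a1 := Nat.le_ceil (3 * Real.pi^2/δ^2)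
  have a2 := Nat.ceil_lt_add_one (a := 3 * Real.pi^2/δ^2) (by positivity)
  rw [hm] at a1 a2
  push_cast at a1 a2
  refine ⟨m+1, ?_, ?_⟩
  · push_cast
    rw [show 6 * Real.pi^2/δ^2 = 2 * (3 * Real.pi^2/δ^2) by ring]
    linarith
  · have hW := Wk_lower m
    have hWp := Wk_pos (m+1)
    have a3 : (m:ℝ) + 1 ≤ 4 * (Real.pi^2/δ^2) := by
      have : 3 * Real.pi^2/δ^2 = 3 * (Real.pi^2/δ^2) := by ring
      linarith
    have a4 : Real.pi^2 ≤ Wk (m+1) ^ 2 * (4 * (Real.pi^2/δ^2)) := hW.trans (by gcongr)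
    have a5 : (δ/2)^2 ≤ Wk (m+1)^2 := by
      have e : Wk (m+1) ^ 2 * (4 * (Real.pi^2/δ^2)) = Real.pi^2 * (Wk (m+1)^2 * 4 / δ^2) := by ring
      rw [e] at a4
      have a6 : 1 ≤ Wk (m+1)^2 * 4 / δ^2 := by
        by_contra hh
        push Not at hh
        nlinarith [sq_pos_of_pos hpi]
      rw [one_le_div (by positivity)] at a6
      linarith
    exact (pow_le_pow_iff_left₀ (by positivity) hWp.le (by norm_num)).mp a5

lemma local_lower (δ : ℝ) (hδ : 0 < δ) (m : ℕ) (hm : 6 * Real.pi^2 / δ^2 ≤ 2*m+2)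
    (ψ : ℝ → ℝ) (hψ : Continuous ψ)
    (hper : Function.Periodic (fun t => Complex.exp (Complex.I * ψ t)) (2 * Real.pi))
    (k : ℤ) (t0 θ : ℝ) (H : ∀ t, |t - t0| ≤ δ → |ψ t - k * t - θ| ≤ 1) :
    Wk m / (8 * Real.pi) ≤
      ‖fourierCoef (fun t => Complex.exp (Complex.I * ψ t) * ((qk (t - t0) ^ m : ℝ) : ℂ)) k‖ := by
  have hpi := Real.pi_pos
  have hq := continuous_qk
  -- the integral over the translated period
  set F : ℝ → ℂ := fun t => Complex.exp (Complex.I * ψ t) * ((qk (t - t0) ^ m : ℝ) : ℂ) *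
    Complex.exp (-Complex.I * (k : ℂ) * (t : ℂ)) with hF
  have hFc : Continuous F := by rw [hF]; fun_prop
  have hFper : Function.Periodic F (2 * Real.pi) := by
    intro t
    have h1 := hper t
    have h2 : qk (t + 2 * Real.pi - t0) = qk (t - t0) := by
      rw [← qk_periodic (t - t0)]; ring_nf
    have h3 : Complex.exp (-Complex.I * (k : ℂ) * ((t + 2 * Real.pi : ℝ) : ℂ)) =
        Complex.exp (-Complex.I * (k : ℂ) * (t : ℂ)) := by
      rw [Complex.exp_eq_exp_iff_exists_int]
      exact ⟨-k, by push_cast; ring⟩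
    simp only at h1
    simp only [hF, h1, h2, h3]
  have hI : ∫ t in (0:ℝ)..(2 * Real.pi), F t = ∫ s in (-Real.pi)..Real.pi, F (s + t0) := by
    have h := hFper.intervalIntegral_add_eq 0 (t0 - Real.pi)
    rw [zero_add] at h
    rw [h, intervalIntegral.integral_comp_add_right]
    congr 1 <;> ring
  set G : ℝ → ℝ := fun s => Real.cos (ψ (s + t0) - k * (s + t0) - θ) * qk s ^ m with hG
  have hGc : Continuous G := by rw [hG]; fun_prop
  -- real part
  have hre : ∀ s : ℝ, (Complex.exp (-Complex.I * θ) * F (s + t0)).re = G s := by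
    intro s
    have : Complex.exp (-Complex.I * θ) * F (s + t0) =
       ((qk s ^ m : ℝ) : ℂ) * Complex.exp (((ψ (s + t0) - k * (s + t0) - θ : ℝ) : ℂ) * Complex.I) := by
      simp only [hF, add_sub_cancel_right]
      rw [show ∀ a b c d : ℂ, a * (b * c * d) = c * (a * b * d) by intros; ring, ← Complex.exp_add,
        ← Complex.exp_add]
      push_cast; ring_nf
    rw [this, Complex.re_ofReal_mul, Complex.exp_ofReal_mul_I_re, mul_comm]
  have hIre : ∫ s in (-Real.pi)..Real.pi, G s ≤ ‖∫ s in (-Real.pi)..Real.pi, F (s + t0)‖ := by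
    have hint : IntervalIntegrable (fun s => Complex.exp (-Complex.I * θ) * F (s + t0)) volume
      (-Real.pi) Real.pi := by apply Continuous.intervalIntegrable; fun_prop
    have e1 : ∫ s in (-Real.pi)..Real.pi, G s =
        (∫ s in (-Real.pi)..Real.pi, Complex.exp (-Complex.I * θ) * F (s + t0)).re := by
      have := Complex.reCLM.intervalIntegral_comp_comm hint
      simp only [Complex.reCLM_apply, hre] at this
      exact this
    rw [e1, intervalIntegral.integral_const_mul]
    refine (Complex.re_le_norm _).trans ?_
    rw [norm_mul, Complex.norm_exp]; simp
  -- lower bound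
  have hlow : Wk m / 4 ≤ ∫ s in (-Real.pi)..Real.pi, G s := by
    set A : ℝ := 3 / 2 * Real.pi^2 / δ^2 with hA
    have hA0 : 0 ≤ A := by positivity
    have h1 : ∫ s in (-Real.pi)..Real.pi, ((1/2 - A) * qk s ^ m + A * qk s ^ (m+1)) ≤
        ∫ s in (-Real.pi)..Real.pi, G s := by
      apply intervalIntegral.integral_mono_on (by linarith)
      · apply Continuous.intervalIntegrable; fun_prop
      · exact hGc.intervalIntegrable _ _
      intro s hs
      have hsq := sq_le_sin s hs
      have hqm : 0 ≤ qk s ^ m := pow_nonneg (qk_nonneg s) m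
      have hA1 : 0 ≤ A * (1 - qk s) := by
        apply mul_nonneg hA0; nlinarith [sq_nonneg s, sq_pos_of_pos hpi]
      have : 1/2 - A * (1 - qk s) ≤ Real.cos (ψ (s + t0) - k * (s + t0) - θ) := by
        by_cases hsd : |s| ≤ δ
        · have := half_le_cos _ (H (s + t0) (by simpa using hsd))
          linarith
        · push Not at hsd
          have c1 := Real.neg_one_le_cos (ψ (s + t0) - k * (s + t0) - θ)
          have c2 : δ^2 ≤ Real.pi^2 * (1 - qk s) := by
            refine le_trans ?_ hsq
            rw [← sq_abs s]; gcongr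
          have c3 : 3/2 ≤ A * (1 - qk s) := by
            rw [hA, div_mul_eq_mul_div, le_div_iff₀ (by positivity)]
            linarith
          linarith
      calc _ = (1/2 - A * (1 - qk s)) * qk s ^ m := by ring
        _ ≤ _ := by simp only [hG]; gcongr
    refine le_trans ?_ h1
    rw [intervalIntegral.integral_add (by apply Continuous.intervalIntegrable; fun_prop)
      (by apply Continuous.intervalIntegrable; fun_prop), intervalIntegral.integral_const_mul,
      intervalIntegral.integral_const_mul]
    change Wk m / 4 ≤ (1/2 - A) * Wk m + A * Wk (m+1)
    rw [Wk_succ]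
    have hA4 : A ≤ (2*m+2)/4 := by
      rw [hA]
      have : 6 * Real.pi^2/δ^2 = 4 * (3/2 * Real.pi^2/δ^2) := by ring
      linarith
    have e : (1/2 - A) * Wk m + A * ((2*m+1)/(2*m+2) * Wk m) = (1/2 - A / (2*m+2)) * Wk m := by
      field_simp; ring
    rw [e]
    have : A / (2*m+2) ≤ 1/4 := by
      rw [div_le_iff₀ (by positivity)]; linarith
    nlinarith [Wk_pos m]
  have e : fourierCoef (fun t => Complex.exp (Complex.I * ψ t) * ((qk (t - t0) ^ m : ℝ) : ℂ)) k =
    (1 / (2 * (Real.pi : ℂ))) * ∫ t in (0:ℝ)..(2 * Real.pi), F t := rfl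
  rw [e, hI, norm_mul]
  have : ‖(1 / (2 * (Real.pi : ℂ)))‖ = 1 / (2 * Real.pi) := by
    simp [abs_of_pos hpi]
  rw [this]
  calc Wk m / (8 * Real.pi) = 1 / (2 * Real.pi) * (Wk m / 4) := by field_simp; ring
    _ ≤ _ := by gcongr; exact hlow.trans hIre

lemma ApNorm_exp_lower (p : ℝ) (hp : 1 ≤ p) (δ : ℝ) (hδ : 0 < δ) (hδπ : δ ≤ Real.pi)
    (ψ : ℝ → ℝ) (hψ : Continuous ψ)
    (hper : Function.Periodic (fun t => Complex.exp (Complex.I * ψ t)) (2 * Real.pi))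
    (S : Finset ℤ)
    (H : ∀ k ∈ S, ∃ t0 θ : ℝ, ∀ t, |t - t0| ≤ δ → |ψ t - k * t - θ| ≤ 1) :
    ENNReal.ofReal ((S.card : ℝ) ^ (1/p) * (δ / (16 * Real.pi))) ≤
      ApNorm p (fun t => Complex.exp (Complex.I * ψ t)) := by
  obtain ⟨m, hm1, hm2⟩ := exists_m δ hδ hδπ
  have hpi := Real.pi_pos
  apply ApNorm_lower p hp _ (by fun_prop) m S _ (by positivity)
  intro k hk
  obtain ⟨t0, θ, h⟩ := H k hk
  refine ⟨t0, le_trans ?_ (local_lower δ hδ m hm1 ψ hψ hper k t0 θ h)⟩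
  calc δ / (16 * Real.pi) = (δ/2) / (8 * Real.pi) := by field_simp; norm_num
    _ ≤ _ := by gcongr

/-- Theorem 3: for a nonlinear C^{1,ω}-smooth map φ of the circle into
itself, ‖e^{inφ}‖_{A_p} ≥ c_p·|n|^{1/p}·χ^{-1}(1/|n|) for all nonzero integers n. -/
theorem statement15
    (p : ℝ) (hp1 : 1 ≤ p) (hp2 : p < 2)
    -- ω is a modulus of continuity: continuous non-decreasing on [0,∞), ω(0)=0, ω(δ)>0 for δ>0,
    -- with χ(δ) = δ·ω(δ) strictly increasing and unbounded, and χinv its inverse.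
    (ω : ℝ → ℝ)
    (hω_cont : ContinuousOn ω (Ici 0)) (hω_mono : MonotoneOn ω (Ici 0))
    (hω_zero : ω 0 = 0) (hω_pos : ∀ δ : ℝ, 0 < δ → 0 < ω δ)
    (hχ_mono : StrictMonoOn (fun δ => δ * ω δ) (Ici 0))
    (hχ_unbdd : ∀ y : ℝ, ∃ δ : ℝ, 0 ≤ δ ∧ y < δ * ω δ)
    (χinv : ℝ → ℝ)
    (hχinv_left : ∀ δ : ℝ, 0 ≤ δ → χinv (δ * ω δ) = δ)
    (hχinv_right : ∀ y : ℝ, 0 ≤ y → 0 ≤ χinv y ∧ χinv y * ω (χinv y) = y)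
    (φ : ℝ → ℝ)
    -- φ is a map of the circle into itself: φ(t+2π) = φ(t) (mod 2π)
    (hφ_circ : ∀ t : ℝ, ∃ k : ℤ, φ (t + 2 * Real.pi) - φ t = 2 * Real.pi * k)
    (hφ_C1 : ContDiff ℝ 1 φ)
    (hφ_lip : ∃ C : ℝ, 0 < C ∧ ∀ s t : ℝ, |deriv φ s - deriv φ t| ≤ C * ω |s - t|)
    -- φ is nonlinear
    (hφ_nonlinear : ¬ ∃ a b : ℝ, ∀ t : ℝ, φ t = a * t + b) :
    ∃ c : ℝ, 0 < c ∧ ∀ n : ℤ, n ≠ 0 →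
      ENNReal.ofReal (c * |(n : ℝ)| ^ (1 / p) * χinv (1 / |(n : ℝ)|)) ≤
        ApNorm p (fun t => Complex.exp (Complex.I * (n : ℂ) * (φ t : ℂ))) := by
  obtain ⟨C, hC, hlip⟩ := hφ_lip
  have hpi := Real.pi_pos
  have hdiff : Differentiable ℝ φ := hφ_C1.differentiable (by norm_num)
  have hdc : Continuous (deriv φ) := hφ_C1.continuous_deriv (by norm_num)
  -- nonconstant derivative
  obtain ⟨t1, t2, h12⟩ : ∃ t1 t2, deriv φ t1 < deriv φ t2 := by
    by_contra hcon
    push Not at hcon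
    apply hφ_nonlinear
    refine ⟨deriv φ 0, φ 0, fun t => ?_⟩
    have hc := is_const_of_deriv_eq_zero (f := fun t => φ t - deriv φ 0 * t)
      (by fun_prop) (fun x => by
        have hd : HasDerivAt (fun t => φ t - deriv φ 0 * t) (deriv φ x - deriv φ 0 * 1) x :=
          (hdiff x).hasDerivAt.sub ((hasDerivAt_id x).const_mul _)
        rw [hd.deriv, le_antisymm (hcon 0 x) (hcon x 0)]; ring) t 0
    linarith
  set a := deriv φ t1
  set b := deriv φ t2
  have hba : 0 < b - a := by linarith
  set D := χinv 1 with hD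
  have hD0 : 0 < D := by
    obtain ⟨h1, h2⟩ := hχinv_right 1 (by norm_num)
    rcases h1.eq_or_lt with h | h
    · rw [← h] at h2; simp at h2
    · exact h
  set N := 2 / (b - a) with hN
  have hN0 : 0 < N := by positivity
  set κ := min 1 (min (1/C) (Real.pi / D)) with hκ
  have hκ0 : 0 < κ := by positivity
  have hκ1 : κ ≤ 1 := min_le_left _ _
  have hκ2 : κ ≤ 1/C := (min_le_right _ _).trans (min_le_left _ _)
  have hκ3 : κ ≤ Real.pi / D := (min_le_right _ _).trans (min_le_right _ _)
  obtain ⟨η, hη0, hη⟩ : ∃ η > 0, ∀ t : ℝ, |t| ≤ η → |φ t - φ 0| ≤ 1 / N := by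
    obtain ⟨ε, hε, h⟩ := Metric.continuous_iff.mp hdiff.continuous 0 (1/N) (by positivity)
    refine ⟨ε/2, by positivity, fun t ht => ?_⟩
    have := h t (by rw [Real.dist_eq, sub_zero]; linarith)
    rw [Real.dist_eq] at this
    exact this.le
  set η' := min η Real.pi with hη'
  have hη'0 : 0 < η' := by positivity
  refine ⟨min (((b - a)/2) ^ (1/p) * (κ / (16 * Real.pi))) (η' / (16 * Real.pi) / (N * D)),
    by positivity, ?_⟩
  intro n hn
  have hn1 : (1:ℝ) ≤ |(n:ℝ)| := by exact_mod_cast Int.one_le_abs hn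
  have hn0 : (0:ℝ) < |(n:ℝ)| := by linarith
  have hp0 : 0 < p := by linarith
  set d := χinv (1 / |(n:ℝ)|) with hd
  obtain ⟨hd0', hdeq⟩ := hχinv_right (1 / |(n:ℝ)|) (by positivity)
  rw [← hd] at hd0' hdeq
  have hd0 : 0 < d := by
    rcases hd0'.eq_or_lt with h | h
    · exfalso
      rw [← h, zero_mul] at hdeq
      have : 0 < 1 / |(n:ℝ)| := by positivity
      linarith
    · exact h
  have hdD : d ≤ D := by
    by_contra hlt
    push Not at hlt
    have h1 := hχ_mono (mem_Ici.mpr hD0.le) (mem_Ici.mpr hd0') hlt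
    have h2 := (hχinv_right 1 (by norm_num)).2
    rw [← hD] at h2
    simp only [hdeq, h2] at h1
    have : 1 / |(n:ℝ)| ≤ 1 := by rw [div_le_one hn0]; exact hn1
    linarith
  set ψ : ℝ → ℝ := fun t => n * φ t with hψ
  have hψc : Continuous ψ := by have := hdiff.continuous; fun_prop
  have hfun : (fun t => Complex.exp (Complex.I * (n : ℂ) * (φ t : ℂ))) =
      fun t => Complex.exp (Complex.I * ψ t) := by
    funext t; simp only [hψ]; push_cast; ring_nf
  have hper : Function.Periodic (fun t => Complex.exp (Complex.I * ψ t)) (2 * Real.pi) := by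
    intro t
    obtain ⟨k, hk⟩ := hφ_circ t
    have hk' : φ (t + 2 * Real.pi) = φ t + 2 * Real.pi * k := by linarith
    simp only [hψ, hk']
    rw [Complex.exp_eq_exp_iff_exists_int]
    exact ⟨n * k, by push_cast; ring⟩
  rw [hfun]
  by_cases hcase : 2 ≤ |(n:ℝ)| * (b - a)
  · -- many integers
    obtain ⟨S, hSc, hS⟩ : ∃ S : Finset ℤ, |(n:ℝ)| * (b - a) / 2 ≤ S.card ∧
        ∀ k ∈ S, ∃ t0, n * deriv φ t0 = k := by
      have gen : ∀ x y : ℝ, 2 ≤ y - x → (y - x)/2 ≤ ((Finset.Icc ⌈x⌉ ⌊y⌋).card : ℝ) := by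
        intro x y hxy
        rw [Int.card_Icc]
        have h1 := Int.ceil_lt_add_one x
        have h2 := Int.lt_floor_add_one y
        have h3 : ((⌊y⌋ + 1 - ⌈x⌉ : ℤ) : ℝ) ≤ ((⌊y⌋ + 1 - ⌈x⌉).toNat : ℝ) := by
          exact_mod_cast Int.self_le_toNat _
        push_cast at h3
        linarith
      have hn0' : (n:ℝ) ≠ 0 := by exact_mod_cast hn
      have ivt : ∀ k : ℤ, a ≤ k / n → (k:ℝ) / n ≤ b → ∃ t0, n * deriv φ t0 = k := by
        intro k h1 h2
        obtain ⟨t0, ht⟩ := mem_range_of_exists_le_of_exists_ge hdc ⟨t1, h1⟩ ⟨t2, h2⟩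
        exact ⟨t0, by rw [ht]; field_simp⟩
      rcases lt_or_gt_of_ne hn0' with hneg | hpos
      · rw [abs_of_neg hneg] at hcase ⊢
        refine ⟨Finset.Icc ⌈n * b⌉ ⌊n * a⌋, ?_, ?_⟩
        · have := gen (n * b) (n * a) (by linarith)
          linarith
        · intro k hk
          rw [Finset.mem_Icc, Int.ceil_le, Int.le_floor] at hk
          apply ivt
          · rw [le_div_iff_of_neg hneg]; linarith
          · rw [div_le_iff_of_neg hneg]; linarith
      · rw [abs_of_pos hpos] at hcase ⊢
        refine ⟨Finset.Icc ⌈n * a⌉ ⌊n * b⌋, ?_, ?_⟩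
        · have := gen (n * a) (n * b) (by linarith)
          linarith
        · intro k hk
          rw [Finset.mem_Icc, Int.ceil_le, Int.le_floor] at hk
          apply ivt
          · rw [le_div_iff₀ hpos]; linarith
          · rw [div_le_iff₀ hpos]; linarith
    have hδπ : κ * d ≤ Real.pi := by
      calc κ * d ≤ Real.pi / D * D := by gcongr
        _ = Real.pi := by field_simp
    refine le_trans (ENNReal.ofReal_le_ofReal ?_)
      (ApNorm_exp_lower p hp1 (κ * d) (by positivity) hδπ ψ hψc hper S ?_)
    · calc _ ≤ ((b - a)/2) ^ (1/p) * (κ / (16 * Real.pi)) * |(n:ℝ)| ^ (1/p) * d := by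
            gcongr; exact min_le_left _ _
        _ = (|(n:ℝ)| * (b - a) / 2) ^ (1/p) * (κ * d / (16 * Real.pi)) := by
            rw [mul_div_assoc, Real.mul_rpow (by positivity) (by positivity)]; ring
        _ ≤ _ := by gcongr
    · intro k hk
      obtain ⟨t0, ht0⟩ := hS k hk
      refine ⟨t0, n * φ t0 - k * t0, fun t ht => ?_⟩
      have mv := Convex.norm_image_sub_le_of_norm_hasDerivWithin_le
        (f := fun t => φ t - deriv φ t0 * t) (f' := fun t => deriv φ t - deriv φ t0 * 1)
        (s := Icc (t0 - κ * d) (t0 + κ * d)) (x := t0) (y := t) (C := C * ω d)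
        (fun x _ => ((hdiff x).hasDerivAt.sub
          ((hasDerivAt_id x).const_mul _)).hasDerivWithinAt)
        (fun x hx => by
          rw [Real.norm_eq_abs, mul_one]
          refine (hlip x t0).trans ?_
          gcongr
          apply hω_mono (mem_Ici.mpr (abs_nonneg _)) (mem_Ici.mpr hd0')
          have : |x - t0| ≤ κ * d := abs_le.mpr ⟨by linarith [hx.1], by linarith [hx.2]⟩
          nlinarith)
        (convex_Icc _ _) ⟨by nlinarith, by nlinarith⟩
        ⟨by linarith [(abs_le.mp ht).1], by linarith [(abs_le.mp ht).2]⟩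
      rw [Real.norm_eq_abs, Real.norm_eq_abs] at mv
      have e : ψ t - k * t - (n * φ t0 - k * t0) =
          n * ((φ t - deriv φ t0 * t) - (φ t0 - deriv φ t0 * t0)) := by
        simp only [hψ]; rw [← ht0]; ring
      rw [e, abs_mul]
      have hωd := hω_pos d hd0
      calc _ ≤ |(n:ℝ)| * (C * ω d * (κ * d)) := by
            gcongr; exact mv.trans (by gcongr)
        _ = |(n:ℝ)| * (d * ω d) * (C * κ) := by ring
        _ = C * κ := by rw [hdeq]; field_simp
        _ ≤ C * (1/C) := by gcongr
        _ = 1 := by field_simp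
  · push Not at hcase
    have hnN : |(n:ℝ)| ≤ N := by
      rw [hN, le_div_iff₀ hba]; exact hcase.le
    refine le_trans (ENNReal.ofReal_le_ofReal ?_)
      (ApNorm_exp_lower p hp1 η' hη'0 (min_le_right _ _) ψ hψc hper {0} ?_)
    · have hpw : |(n:ℝ)| ^ (1/p) ≤ N := by
        refine le_trans ?_ hnN
        calc |(n:ℝ)| ^ (1/p) ≤ |(n:ℝ)| ^ (1:ℝ) :=
              Real.rpow_le_rpow_of_exponent_le hn1 (by rw [div_le_one hp0]; exact hp1)
          _ = _ := Real.rpow_one _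
      calc _ ≤ (η' / (16 * Real.pi) / (N * D)) * N * D := by
            gcongr; exact min_le_right _ _
        _ = η' / (16 * Real.pi) := by field_simp
        _ = _ := by simp
    · intro k hk
      rw [Finset.mem_singleton] at hk
      subst hk
      refine ⟨0, n * φ 0, fun t ht => ?_⟩
      rw [sub_zero] at ht
      have h := hη t (ht.trans (min_le_left _ _))
      have e : ψ t - ((0:ℤ):ℝ) * t - n * φ 0 = n * (φ t - φ 0) := by
        simp only [hψ]; push_cast; ring
      rw [e, abs_mul]
      calc _ ≤ N * (1/N) := by gcongr
        _ = 1 := by field_simp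
end
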